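/- Let W be a finite increasing filtration of V over an algebraically closed field of characteristic zero, N a nilpotent endomorphism of V preserving W for which the relative weight filtration M = W^r(N, W) exists, and let Y^r be a grading of M that preserves W and satisfies [Y^r, N] = -2N. Then there exists a unique grading Y of W such that (1) [Y^r, Y] = 0; (2) writing N = N₀ + N₋₁ + N₋₂ + ⋯ for the decomposition of N into eigencomponents of ad Y (N₋ⱼ in the (-j)-eigenspace), one has N₋₁ = 0; and (3) (ad N₀)^{k-1}(N₋ₖ) = 0 for all k > 0. -/

import Mathlib

section
variable {K V : Type*} [Field K] [AddCommGroup V] [Module K V]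

/-- Monodromy weight filtration predicate. -/
def IsWeightFiltration (N : Module.End K V) (Wf : ℤ → Submodule K V) : Prop :=
  Monotone Wf ∧
  (∃ a : ℤ, ∀ k ≤ a, Wf k = ⊥) ∧
  (∃ b : ℤ, ∀ k, b ≤ k → Wf k = ⊤) ∧
  (∀ ℓ : ℤ, ∀ v ∈ Wf ℓ, N v ∈ Wf (ℓ - 2)) ∧
  (∀ ℓ : ℤ, 0 ≤ ℓ →
    ((∀ w ∈ Wf (-ℓ), ∃ v ∈ Wf ℓ, (N ^ ℓ.toNat) v - w ∈ Wf (-ℓ - 1)) ∧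
     (∀ v ∈ Wf ℓ, (N ^ ℓ.toNat) v ∈ Wf (-ℓ - 1) → v ∈ Wf (ℓ - 1))))

/-- The graded piece `Gr^W_k = W_k / W_{k-1}`. -/
abbrev GrPiece (W : ℤ → Submodule K V) (k : ℤ) :=
  W k ⧸ (Submodule.comap (W k).subtype (W (k - 1)))

/-- The endomorphism induced on `Gr^W_k` by an endomorphism preserving `W`. -/
noncomputable def grEnd (W : ℤ → Submodule K V) (N : Module.End K V) (k : ℤ)
    (h1 : ∀ x ∈ W k, N x ∈ W k) (h2 : ∀ x ∈ W (k - 1), N x ∈ W (k - 1)) :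
    Module.End K (GrPiece W k) :=
  Submodule.mapQ _ _ (N.restrict h1) (by
    intro x hx
    simp only [Submodule.mem_comap, LinearMap.restrict_apply] at *
    exact h2 _ hx)

/-- The filtration induced by `M` on `Gr^W_k`. -/
def inducedFil (W M : ℤ → Submodule K V) (k j : ℤ) : Submodule K (GrPiece W k) :=
  ((M j).comap (W k).subtype).map (Submodule.mkQ _)

/-- `M` is the relative weight filtration of `(N, W)`. -/
def IsRelWeightFiltration (W : ℤ → Submodule K V) (N : Module.End K V)
    (hNW : ∀ k, ∀ x ∈ W k, N x ∈ W k) (M : ℤ → Submodule K V) : Prop :=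
  Monotone M ∧
  (∃ a : ℤ, ∀ k ≤ a, M k = ⊥) ∧
  (∃ b : ℤ, ∀ k, b ≤ k → M k = ⊤) ∧
  (∀ k : ℤ, ∀ v ∈ M k, N v ∈ M (k - 2)) ∧
  (∀ k : ℤ, IsWeightFiltration (grEnd W N k (hNW k) (hNW (k - 1)))
      (fun j => inducedFil W M k (j + k)))

/-- `Y` is a grading of the filtration `A`: semisimple with integer eigenvalues and
`A_k = ⊕_{j ≤ k} E_j(Y)`. -/
def IsGrading (A : ℤ → Submodule K V) (Y : Module.End K V) : Prop :=
  ∀ k : ℤ, A k = ⨆ j : ℤ, ⨆ _ : j ≤ k, Module.End.eigenspace Y (j : K)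

/-- The adjoint action `ad A = [A, ·]` on `End(V)`. -/
noncomputable def adE (A : Module.End K V) : Module.End K (Module.End K V) :=
  LinearMap.mulLeft K A - LinearMap.mulRight K A

end

/-!
Splitting `W` compatibly with the eigenspaces of `Y^r` produces some grading `Y₀` of `W` commuting
with `Y^r`, and every other such grading is `u Y₀ u⁻¹` with `u` in the unipotent group of operators
that commute with `Y^r` and are the identity on `Gr^W`. So one has to show that exactly one
conjugate `u⁻¹ N u` satisfies (2) and (3) relative to `Y₀`.

The relative weight filtration says that `N₀` has the hard Lefschetz property with respect to
`H = Y^r - Y₀`. Hence `N₀` and `H` belong to an `sl₂`-triple, so that `ad N₀` has the hard Lefschetz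
property with respect to `ad H`. Conjugating by `1 + Z`, with `Z` commuting with `Y^r` and of
`ad Y₀`-weight `-(k + 1)`, hence of `ad H`-weight `k + 1`, changes `N₋₍ₖ₊₁₎` by `[N₀, Z]` and no
component of higher weight. Since `(ad N₀) ^ (k + 1)` is bijective from `ad H`-weight `k + 1` to
`-(k + 1)`, there is exactly one `Z` for which `(ad N₀) ^ k` kills the new component; one proceeds
by induction on `k`.
-/

section Weight

attribute [local instance] LieRing.ofAssociativeRing

open LieAlgebra

variable {K R M : Type*} [Field K] [Ring R] [Algebra K R] [AddCommGroup M] [Module K M]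

/-- The eigenspace of `h` for the image in `K` of the integer `m`. -/
abbrev weightSpace (h : Module.End K M) (m : ℤ) : Submodule K M :=
  Module.End.eigenspace h (m : K)

lemma mem_weightSpace {h : Module.End K M} {m : ℤ} {v : M} :
    v ∈ weightSpace h m ↔ h v = m • v := by
  rw [Module.End.mem_eigenspace_iff, Int.cast_smul_eq_zsmul]

lemma mem_weightSpace_ad {h x : R} {c : ℤ} : x ∈ weightSpace (ad K R h) c ↔ ⁅h, x⁆ = c • x :=
  mem_weightSpace

lemma mem_weightSpace_ad_iff_smul {h x : R} {c : ℤ} :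
    x ∈ weightSpace (ad K R h) c ↔ h * x - x * h = (c : K) • x :=
  Module.End.mem_eigenspace_iff

lemma mem_weightSpace_ad_zero {h x : R} : x ∈ weightSpace (ad K R h) 0 ↔ Commute h x := by
  rw [mem_weightSpace_ad, zero_smul, Ring.lie_def, sub_eq_zero, commute_iff_eq]

lemma mul_mem_weightSpace_ad {h x y : R} {c d : ℤ} (hx : x ∈ weightSpace (ad K R h) c)
    (hy : y ∈ weightSpace (ad K R h) d) : x * y ∈ weightSpace (ad K R h) (c + d) := by
  rw [mem_weightSpace_ad, Ring.lie_def] at *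
  calc h * (x * y) - x * y * h = (h * x - x * h) * y + x * (h * y - y * h) := by noncomm_ring
    _ = (c + d) • (x * y) := by rw [hx, hy, smul_mul_assoc, mul_smul_comm, add_smul]

lemma pow_mem_weightSpace_ad {h x : R} {c : ℤ} (hx : x ∈ weightSpace (ad K R h) c) (k : ℕ) :
    x ^ k ∈ weightSpace (ad K R h) (k * c) := by
  induction k with
  | zero => simp [Ring.lie_def]
  | succ k ih =>
    rw [pow_succ, Nat.cast_succ, add_one_mul]
    exact mul_mem_weightSpace_ad ih hx

lemma ad_mem_weightSpace_ad {h x : R} {c : ℤ} (hx : x ∈ weightSpace (ad K R h) c) :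
    ad K R x ∈ weightSpace (ad K _ (ad K R h)) c := by
  rw [mem_weightSpace_ad] at *
  rw [← LieHom.map_lie, hx, map_zsmul]

lemma apply_mem_weightSpace {h x : Module.End K M} {c m n : ℤ} {v : M}
    (hx : x ∈ weightSpace (ad K _ h) c) (hv : v ∈ weightSpace h m) (hn : c + m = n) :
    x v ∈ weightSpace h n := by
  rw [mem_weightSpace_ad, Ring.lie_def, sub_eq_iff_eq_add] at hx
  rw [mem_weightSpace] at *
  have := congr($hx v)
  simp only [Module.End.mul_apply, LinearMap.add_apply, LinearMap.smul_apply, hv, map_zsmul] at this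
  rw [this, ← add_smul, hn]

lemma pow_apply_mem_weightSpace {h x : Module.End K M} {c m n : ℤ} {v : M} {k : ℕ}
    (hx : x ∈ weightSpace (ad K _ h) c) (hv : v ∈ weightSpace h m) (hn : k * c + m = n) :
    (x ^ k) v ∈ weightSpace h n :=
  apply_mem_weightSpace (pow_mem_weightSpace_ad hx k) hv hn

end Weight

lemma isAddTorsionFree_of_charZero (K M : Type*) [Field K] [CharZero K] [AddCommGroup M]
    [Module K M] : IsAddTorsionFree M :=
  have := Module.compHom M (algebraMap ℚ K)
  .of_module_rat M

section Lefschetz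

attribute [local instance] LieRing.ofAssociativeRing

open LieAlgebra

variable {K M : Type*} [Field K] [AddCommGroup M] [Module K M]

/-- The hard Lefschetz property of a lowering operator `a` with respect to `h`: the power `a ^ ℓ`
maps the weight space `ℓ` of `h` bijectively onto the weight space `-ℓ`. -/
def IsLefschetz (h a : Module.End K M) : Prop :=
  ∀ ℓ : ℕ, Set.BijOn (a ^ ℓ) (weightSpace h ℓ) (weightSpace h (-ℓ))

variable {a b h : Module.End K M}

lemma raise_pow_succ_lower_apply (hba : ⁅b, a⁆ = h) (ha : a ∈ weightSpace (ad K _ h) (-2))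
    {μ : ℤ} {v : M} (hv : v ∈ weightSpace h μ) (k : ℕ) :
    b ((a ^ (k + 1)) v) = (a ^ (k + 1)) (b v) + ((k + 1) * (μ - k)) • (a ^ k) v := by
  have swap (x : M) : b (a x) = a (b x) + h x := by
    rw [← hba, Ring.lie_def]; simp
  induction k with
  | zero => simp [swap, mem_weightSpace.mp hv]
  | succ k ih =>
    have hw := mem_weightSpace.mp (pow_apply_mem_weightSpace ha hv (k := k + 1) rfl)
    rw [pow_succ' a (k + 1), Module.End.mul_apply, Module.End.mul_apply, swap, ih, hw, map_add,
      map_zsmul, ← Module.End.mul_apply a (a ^ k), ← pow_succ']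
    push_cast
    module

lemma zsmul_lower_pow_apply_eq (hba : ⁅b, a⁆ = h) (ha : a ∈ weightSpace (ad K _ h) (-2))
    {n k : ℕ} {μ : ℤ} {u u' z : M} (hu : u ∈ weightSpace h (2 * k + μ))
    (hu' : u' ∈ weightSpace h (2 * (k + 2 : ℕ) + (μ - 2)))
    (hz : (a ^ (k + 1)) u = (a ^ (k + 2)) u' + (b ^ n) z) :
    ((k + 1) * (k + μ)) • (a ^ k) u =
      (a ^ (k + 1)) (a (b u') + ((k + 2) * (k + 1 + μ)) • u' - b u) + (b ^ (n + 1)) z := by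
  have hbz := congr(b $hz)
  rw [map_add, raise_pow_succ_lower_apply hba ha hu k,
    raise_pow_succ_lower_apply hba ha hu' (k + 1), ← Module.End.mul_apply b, ← pow_succ',
    pow_succ a (k + 1), Module.End.mul_apply] at hbz
  rw [map_sub, map_add, map_zsmul]
  push_cast at hbz
  linear_combination (norm := module) hbz

variable [CharZero K]

lemma eq_zero_of_lower_pow_apply_eq_zero (hba : ⁅b, a⁆ = h) (ha : a ∈ weightSpace (ad K _ h) (-2))
    (hb : b ∈ weightSpace (ad K _ h) 2) {n k : ℕ} {μ : ℤ} {v : M} (hk : k ≤ μ)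
    (hv : v ∈ weightSpace h μ) (hbv : (b ^ n) v = 0) (hav : (a ^ k) v = 0) : v = 0 := by
  have := isAddTorsionFree_of_charZero K M
  induction n generalizing k μ v with
  | zero => exact hbv
  | succ n ihn =>
    induction k with
    | zero => exact hav
    | succ k ihk =>
      have hav' : (a ^ (k + 2)) v = 0 := by
        rw [pow_succ', Module.End.mul_apply, hav, map_zero]
      have hbv0 : b v = 0 := by
        refine ihn (k := k + 2) (by push_cast at hk ⊢; lia) (apply_mem_weightSpace hb hv rfl) hbv ?_
        simpa [hav, hav'] using (raise_pow_succ_lower_apply hba ha hv (k + 1)).symm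
      refine ihk (by push_cast at hk; lia) ?_
      have hsmul : ((k + 1) * (μ - k)) • (a ^ k) v = 0 := by
        simpa [hav, hbv0] using (raise_pow_succ_lower_apply hba ha hv k).symm
      refine (smul_eq_zero.mp hsmul).resolve_left (mul_ne_zero ?_ ?_) <;> push_cast at hk <;> lia

lemma exists_eq_lower_pow_add_raise_pow (hba : ⁅b, a⁆ = h) (ha : a ∈ weightSpace (ad K _ h) (-2))
    (hb : b ∈ weightSpace (ad K _ h) 2) (n k : ℕ) {μ : ℤ} {w : M} (hk : μ + k ≤ 0)
    (hw : w ∈ weightSpace h μ) :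
    ∃ u ∈ weightSpace h (2 * k + μ), ∃ z, w = (a ^ k) u + (b ^ n) z := by
  induction n generalizing k μ w with
  | zero => exact ⟨0, zero_mem _, w, by simp⟩
  | succ n ihn =>
    induction k with
    | zero => exact ⟨w, by simpa using hw, 0, by simp⟩
    | succ k ihk =>
      push_cast at hk
      obtain ⟨u, hu, z, rfl⟩ := ihk (by lia)
      have hau : (a ^ (k + 1)) u ∈ weightSpace h (μ - 2) :=
        pow_apply_mem_weightSpace ha hu (by push_cast; ring)
      obtain ⟨u', hu', z', hz'⟩ := ihn (k + 2) (by push_cast; lia) hau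
      set c : K := (((k + 1) * (k + μ) : ℤ) : K)
      have hc : c ≠ 0 := Int.cast_ne_zero.mpr (mul_ne_zero (by lia) (by lia))
      set y := a (b u') + ((k + 2) * (k + 1 + μ)) • u' - b u
      have hy_mem : y ∈ weightSpace h (2 * (k + 1 : ℕ) + μ) := by
        have e : 2 * ((k + 1 : ℕ) : ℤ) + μ = 2 * (k + 2 : ℕ) + (μ - 2) := by push_cast; ring
        refine sub_mem (add_mem ?_ (zsmul_mem (by rwa [e]) _)) ?_
        · exact apply_mem_weightSpace ha (apply_mem_weightSpace hb hu' rfl) (by push_cast; ring)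
        · exact apply_mem_weightSpace hb hu (by push_cast; ring)
      have key := zsmul_lower_pow_apply_eq hba ha hu hu' hz'
      rw [← Int.cast_smul_eq_zsmul K] at key
      refine ⟨c⁻¹ • y, Submodule.smul_mem _ _ hy_mem, c⁻¹ • z' + z, ?_⟩
      rw [map_add, map_smul, map_smul, ← add_assoc, ← smul_add, ← key, inv_smul_smul₀ hc]

lemma isLefschetz_of_sl2 (hba : ⁅b, a⁆ = h) (ha : a ∈ weightSpace (ad K _ h) (-2))
    (hb : b ∈ weightSpace (ad K _ h) 2) (hnil : IsNilpotent b) : IsLefschetz h a := by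
  obtain ⟨n, hn⟩ := hnil
  refine fun ℓ ↦ ⟨fun v hv ↦ ?_, fun v hv v' hv' hvv' ↦ ?_, fun w hw ↦ ?_⟩
  · exact pow_apply_mem_weightSpace ha hv (by ring)
  · refine sub_eq_zero.mp (eq_zero_of_lower_pow_apply_eq_zero hba ha hb (n := n) le_rfl
      (sub_mem hv hv') (by simp [hn]) ?_)
    rw [map_sub, hvv', sub_self]
  · obtain ⟨u, hu, z, rfl⟩ := exists_eq_lower_pow_add_raise_pow hba ha hb n ℓ (by simp) hw
    exact ⟨u, (show (ℓ : ℤ) = 2 * ℓ + -ℓ by ring) ▸ hu, by simp [hn]⟩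

end Lefschetz

section IntDiagonalizable

attribute [local instance] LieRing.ofAssociativeRing

open LieAlgebra Polynomial

variable {K M : Type*} [Field K] [AddCommGroup M] [Module K M]

/-- An endomorphism is integrally diagonalizable if the module is spanned by finitely many of its
eigenspaces for integral eigenvalues. -/
def IsIntDiagonalizable (Y : Module.End K M) : Prop :=
  ∃ s : Finset ℤ, ⨆ k ∈ s, weightSpace Y k = ⊤

/-- The finite increasing filtration attached to an integrally diagonalizable endomorphism: the
span of the weight spaces of weight at most `k`. -/
def weightLE (Y : Module.End K M) (k : ℤ) : Submodule K M :=
  ⨆ j : ℤ, ⨆ _ : j ≤ k, weightSpace Y j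

section WeightLE

variable {Y : Module.End K M} {k l : ℤ}

lemma weightLE_le_iff {p : Submodule K M} :
    weightLE Y k ≤ p ↔ ∀ j ≤ k, weightSpace Y j ≤ p :=
  iSup₂_le_iff

lemma weightSpace_le_weightLE (h : k ≤ l) : weightSpace Y k ≤ weightLE Y l :=
  weightLE_le_iff.mp le_rfl k h

lemma weightLE_mono (Y : Module.End K M) : Monotone (weightLE Y) := fun _ _ h ↦
  weightLE_le_iff.mpr fun _ hj ↦ weightSpace_le_weightLE (hj.trans h)

variable [CharZero K]

lemma disjoint_weightSpace_biSup {s : Set ℤ} (hk : k ∉ s) :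
    Disjoint (weightSpace Y k) (⨆ j ∈ s, weightSpace Y j) :=
  ((Module.End.eigenspaces_iSupIndep Y).comp Int.cast_injective).disjoint_biSup hk

end WeightLE

namespace IsIntDiagonalizable

variable {Y : Module.End K M} (hY : IsIntDiagonalizable Y)

/-- A finite set of weights whose weight spaces span the module. -/
noncomputable def support : Finset ℤ := hY.choose

/-- The projection onto the weight space `k` along the other ones, encoded as a Lagrange
interpolation polynomial in `Y` so that it inherits every stability property of `Y`. -/
noncomputable def proj (k : ℤ) : Module.End K M :=
  aeval Y (Lagrange.basis hY.support (fun j ↦ (j : K)) k)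

include hY in
lemma induction {p : Submodule K M} (h : ∀ k, weightSpace Y k ≤ p) (v : M) : v ∈ p := by
  have : ⨆ k ∈ hY.support, weightSpace Y k = ⊤ := hY.choose_spec
  exact (this.ge.trans (iSup₂_le fun k _ ↦ h k)) trivial

include hY in
lemma hom_ext {M' : Type*} [AddCommGroup M'] [Module K M'] {f g : M →ₗ[K] M'}
    (h : ∀ k, ∀ v ∈ weightSpace Y k, f v = g v) : f = g :=
  LinearMap.ext fun v ↦ hY.induction (p := LinearMap.eqLocus f g) h v

lemma commute_proj {x : Module.End K M} (hx : Commute x Y) (k : ℤ) : Commute x (hY.proj k) :=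
  Algebra.commute_of_mem_adjoin_singleton_of_commute (aeval_mem_adjoin_singleton K Y) hx

lemma proj_apply_mem_of_stable {p : Submodule K M} (hp : ∀ v ∈ p, Y v ∈ p) {v : M} (hv : v ∈ p)
    (k : ℤ) : hY.proj k v ∈ p :=
  aeval_apply_smul_mem_of_le_comap hv _ Y hp

lemma proj_apply_mem_weightSpace {X : Module.End K M} (hXY : Commute X Y) {m : ℤ} {v : M}
    (hv : v ∈ weightSpace X m) (k : ℤ) : hY.proj k v ∈ weightSpace X m :=
  hY.proj_apply_mem_of_stable (fun _ hu ↦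
    apply_mem_weightSpace (mem_weightSpace_ad_zero.mpr hXY) hu (zero_add m)) hv k

variable [CharZero K] {k l : ℤ} {v : M}

lemma weightSpace_eq_bot (hk : k ∉ hY.support) : weightSpace Y k = ⊥ := by
  have := disjoint_weightSpace_biSup (Y := Y) (s := hY.support) hk
  simp only [Finset.mem_coe] at this
  exact disjoint_top.mp (hY.choose_spec ▸ this)

lemma proj_apply_of_mem (hv : v ∈ weightSpace Y k) (l : ℤ) :
    hY.proj l v = if l = k then v else 0 := by
  by_cases hk : k ∈ hY.support
  swap
  · simp [show v = 0 by simpa [hY.weightSpace_eq_bot hk] using hv]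
  rcases eq_or_ne v 0 with rfl | hv0
  · simp
  rw [proj, Module.End.aeval_apply_of_hasEigenvector ⟨hv, hv0⟩]
  split_ifs with h
  · rw [h, Lagrange.eval_basis_self Int.cast_injective.injOn hk, one_smul]
  · rw [Lagrange.eval_basis_of_ne h hk, zero_smul]

lemma proj_apply_same (hv : v ∈ weightSpace Y k) : hY.proj k v = v := by
  simp [hY.proj_apply_of_mem hv]

lemma proj_apply_ne (hv : v ∈ weightSpace Y k) (h : l ≠ k) : hY.proj l v = 0 := by
  simp [hY.proj_apply_of_mem hv, h]

lemma proj_apply_mem (k : ℤ) (v : M) : hY.proj k v ∈ weightSpace Y k := by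
  refine hY.induction (p := (weightSpace Y k).comap (hY.proj k)) (fun l v hv ↦ ?_) v
  rw [Submodule.mem_comap, hY.proj_apply_of_mem hv]
  split_ifs with h
  · exact h ▸ hv
  · exact zero_mem _

lemma sum_proj : ∑ k ∈ hY.support, hY.proj k = 1 := by
  refine hY.hom_ext fun k v hv ↦ ?_
  rw [LinearMap.sum_apply, Module.End.one_apply]
  by_cases hk : k ∈ hY.support
  · simp [hY.proj_apply_of_mem hv, hk]
  · simp [show v = 0 by simpa [hY.weightSpace_eq_bot hk] using hv]

lemma mem_weightLE_iff : v ∈ weightLE Y k ↔ ∀ l, k < l → hY.proj l v = 0 := by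
  constructor
  · intro hv l hl
    refine (weightLE_le_iff.mpr fun j hj u hu ↦ ?_ : _ ≤ LinearMap.ker (hY.proj l)) hv
    exact hY.proj_apply_ne hu (hj.trans_lt hl).ne'
  · intro hv
    rw [← Module.End.one_apply (R := K) v, ← hY.sum_proj, LinearMap.sum_apply]
    refine sum_mem fun l _ ↦ ?_
    rcases le_or_gt l k with hl | hl
    · exact weightSpace_le_weightLE hl (hY.proj_apply_mem l v)
    · exact hv l hl ▸ zero_mem _

lemma mem_weightLE_sub_one_iff (hv : v ∈ weightLE Y k) :
    v ∈ weightLE Y (k - 1) ↔ hY.proj k v = 0 := by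
  rw [hY.mem_weightLE_iff] at *
  refine ⟨fun h ↦ h k (by lia), fun h l hl ↦ ?_⟩
  rcases eq_or_lt_of_le (show k ≤ l by lia) with rfl | hl'
  exacts [h, hv l hl']

lemma sub_proj_mem_weightLE (hv : v ∈ weightLE Y k) : v - hY.proj k v ∈ weightLE Y (k - 1) := by
  rw [hY.mem_weightLE_sub_one_iff
    (sub_mem hv (weightSpace_le_weightLE le_rfl (hY.proj_apply_mem k v))), map_sub,
    hY.proj_apply_same (hY.proj_apply_mem k v), sub_self]

include hY in
lemma exists_weightLE_eq_bot : ∃ a, ∀ k ≤ a, weightLE Y k = ⊥ := by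
  obtain ⟨a, ha⟩ := hY.support.bddBelow
  refine ⟨a - 1, fun k hk ↦ eq_bot_iff.mpr (weightLE_le_iff.mpr fun j hj ↦ ?_)⟩
  exact (hY.weightSpace_eq_bot fun hmem ↦ by have := ha hmem; lia).le

end IsIntDiagonalizable

lemma IsGrading.isIntDiagonalizable {A : ℤ → Submodule K M} {Y : Module.End K M}
    (hY : IsGrading A Y) (hbot : ∃ a, ∀ k ≤ a, A k = ⊥) (htop : ∃ b, ∀ k, b ≤ k → A k = ⊤) :
    IsIntDiagonalizable Y := by
  obtain ⟨a, ha⟩ := hbot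
  obtain ⟨b, hb⟩ := htop
  refine ⟨Finset.Icc a b, top_le_iff.mp ?_⟩
  rw [← hb b le_rfl, hY b]
  refine weightLE_le_iff.mpr fun j hj ↦ ?_
  rcases le_total a j with haj | hja
  · exact le_iSup₂_of_le j (Finset.mem_Icc.mpr ⟨haj, hj⟩) le_rfl
  · have : weightLE Y j = ⊥ := (hY j).symm.trans (ha j hja)
    exact (weightSpace_le_weightLE le_rfl).trans (this.trans_le bot_le)

lemma IsIntDiagonalizable.mem_weightSpace_ad_iff {Y x : Module.End K M}
    (hY : IsIntDiagonalizable Y) {c : ℤ} :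
    x ∈ weightSpace (LieAlgebra.ad K _ Y) c ↔
      ∀ k, ∀ v ∈ weightSpace Y k, x v ∈ weightSpace Y (c + k) := by
  refine ⟨fun hx k v hv ↦ apply_mem_weightSpace hx hv rfl, fun hx ↦ ?_⟩
  rw [mem_weightSpace_ad, Ring.lie_def]
  refine hY.hom_ext fun k v hv ↦ ?_
  simp only [LinearMap.sub_apply, Module.End.mul_apply, LinearMap.smul_apply,
    mem_weightSpace.mp hv, mem_weightSpace.mp (hx k v hv), map_zsmul]
  module

variable [CharZero K]

lemma IsIntDiagonalizable.sub {X Y : Module.End K M} (hX : IsIntDiagonalizable X)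
    (hY : IsIntDiagonalizable Y) (hXY : Commute X Y) : IsIntDiagonalizable (X - Y) := by
  refine ⟨Finset.image₂ (· - ·) hX.support hY.support, eq_top_iff.mpr fun v _ ↦ ?_⟩
  have hv : v = ∑ k ∈ hX.support, ∑ l ∈ hY.support, hX.proj k (hY.proj l v) := by
    simp_rw [← map_sum, ← LinearMap.sum_apply, hY.sum_proj, hX.sum_proj]
    rfl
  rw [hv]
  refine sum_mem fun k hk ↦ sum_mem fun l hl ↦ ?_
  refine Submodule.mem_iSup_of_mem (k - l) (Submodule.mem_iSup_of_mem
    (Finset.mem_image₂_of_mem hk hl) ?_)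
  have hXkl := mem_weightSpace.mp (hX.proj_apply_mem k (hY.proj l v))
  have hYkl := hX.proj_apply_mem_weightSpace hXY.symm (hY.proj_apply_mem l v) k
  rw [mem_weightSpace, LinearMap.sub_apply, hXkl, mem_weightSpace.mp hYkl, sub_smul]

lemma IsIntDiagonalizable.mul_proj {Y : Module.End K M} (hY : IsIntDiagonalizable Y) (k : ℤ) :
    Y * hY.proj k = k • hY.proj k :=
  LinearMap.ext fun v ↦ mem_weightSpace.mp (hY.proj_apply_mem k v)

lemma IsIntDiagonalizable.proj_mul {Y : Module.End K M} (hY : IsIntDiagonalizable Y) (k : ℤ) :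
    hY.proj k * Y = k • hY.proj k := by
  rw [← hY.commute_proj (Commute.refl Y) k, hY.mul_proj]

lemma IsIntDiagonalizable.proj_mul_mul_proj_mem {Y : Module.End K M} (hY : IsIntDiagonalizable Y)
    (X : Module.End K M) (k l : ℤ) :
    hY.proj k * X * hY.proj l ∈ weightSpace (ad K _ Y) (k - l) := by
  rw [mem_weightSpace_ad, Ring.lie_def, mul_assoc _ _ Y, hY.proj_mul, ← mul_assoc, ← mul_assoc,
    hY.mul_proj, sub_smul]
  simp only [mul_smul_comm, smul_mul_assoc]

lemma IsIntDiagonalizable.sum_proj_mul_mul_proj {Y : Module.End K M} (hY : IsIntDiagonalizable Y)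
    (X : Module.End K M) :
    ∑ k ∈ hY.support, ∑ l ∈ hY.support, hY.proj k * X * hY.proj l = X := by
  simp_rw [← Finset.mul_sum, ← Finset.sum_mul, hY.sum_proj, one_mul, mul_one]

lemma IsIntDiagonalizable.ad {Y : Module.End K M} (hY : IsIntDiagonalizable Y) :
    IsIntDiagonalizable (ad K _ Y) := by
  refine ⟨Finset.image₂ (· - ·) hY.support hY.support, eq_top_iff.mpr fun X _ ↦ ?_⟩
  rw [← hY.sum_proj_mul_mul_proj X]
  exact sum_mem fun k hk ↦ sum_mem fun l hl ↦ Submodule.mem_iSup_of_mem (k - l)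
    (Submodule.mem_iSup_of_mem (Finset.mem_image₂_of_mem hk hl) (hY.proj_mul_mul_proj_mem X k l))

lemma IsIntDiagonalizable.mem_weightLE_ad_iff {Y : Module.End K M} (hY : IsIntDiagonalizable Y)
    {X : Module.End K M} {c : ℤ} :
    X ∈ weightLE (LieAlgebra.ad K _ Y) c ↔ ∀ k, ∀ v ∈ weightLE Y k, X v ∈ weightLE Y (c + k) := by
  constructor
  · intro hX k v hv
    refine (weightLE_le_iff.mpr fun d hd Z hZ ↦ ?_ : _ ≤
      (weightLE Y (c + k)).comap (LinearMap.applyₗ v)) hX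
    refine (weightLE_le_iff.mpr fun j hj u hu ↦ ?_ : _ ≤ (weightLE Y (c + k)).comap Z) hv
    exact weightSpace_le_weightLE (by lia) (apply_mem_weightSpace hZ hu rfl)
  · intro hX
    rw [← hY.sum_proj_mul_mul_proj X]
    refine sum_mem fun k _ ↦ sum_mem fun l _ ↦ ?_
    rcases le_or_gt k (c + l) with hkl | hkl
    · exact weightSpace_le_weightLE (by lia) (hY.proj_mul_mul_proj_mem X k l)
    · suffices hY.proj k * X * hY.proj l = 0 from this ▸ zero_mem _
      ext v
      exact hY.mem_weightLE_iff.mp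
        (hX l _ (weightSpace_le_weightLE le_rfl (hY.proj_apply_mem l v))) k hkl

lemma IsIntDiagonalizable.isNilpotent_of_mem_weightSpace_ad {R : Type*} [Ring R] [Algebra K R]
    {y x : R} (hy : IsIntDiagonalizable (LieAlgebra.ad K R y)) {c : ℤ} (hc : c ≠ 0)
    (hx : x ∈ weightSpace (LieAlgebra.ad K R y) c) : IsNilpotent x := by
  obtain ⟨n, hn⟩ := (hy.support.finite_toSet.preimage
    (f := fun n : ℕ ↦ n * c) (by intro m _ n _; simp [hc])).exists_notMem
  refine ⟨n, ?_⟩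
  simpa [hy.weightSpace_eq_bot hn] using pow_mem_weightSpace_ad hx n

lemma IsIntDiagonalizable.exists_apply_eq {M' : Type*} [AddCommGroup M'] [Module K M']
    {Y : Module.End K M} (hY : IsIntDiagonalizable Y) (f : ℤ → M →ₗ[K] M') :
    ∃ g : M →ₗ[K] M', ∀ k, ∀ v ∈ weightSpace Y k, g v = f k v := by
  refine ⟨∑ k ∈ hY.support, f k ∘ₗ hY.proj k, fun k v hv ↦ ?_⟩
  by_cases hk : k ∈ hY.support
  · simp [LinearMap.sum_apply, hY.proj_apply_of_mem hv, apply_ite, hk]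
  · simp [show v = 0 by simpa [hY.weightSpace_eq_bot hk] using hv]

end IntDiagonalizable

section RaisingOperator

attribute [local instance] LieRing.ofAssociativeRing

open LieAlgebra

variable {K M : Type*} [Field K] [AddCommGroup M] [Module K M] {a h : Module.End K M}

lemma exists_apply_apply_eq_of_injOn {f : Module.End K M} {p : Submodule K M}
    (hf : Set.InjOn f p) : ∃ g : Module.End K M, ∀ v ∈ p, g (f v) = v := by
  obtain ⟨g, hg⟩ := (f ∘ₗ p.subtype).exists_leftInverse_of_injective
    (LinearMap.ker_eq_bot.mpr (Set.injOn_iff_injective.mp hf))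
  exact ⟨p.subtype ∘ₗ g, fun v hv ↦ congr((($hg ⟨v, hv⟩ : p) : M))⟩

/-- `T` is a partial inverse of the lowering operator `a`: it undoes `a` on the strings
`u, a u, …, a ^ ℓ u` starting in weight `ℓ`, as far as `a ^ (ℓ + 1)` allows. -/
structure IsPartialInverse (h a T : Module.End K M) : Prop where
  mem_weightSpace_ad : T ∈ weightSpace (ad K _ h) 2
  apply_pow_succ : ∀ ℓ : ℕ, ∀ u ∈ weightSpace h ℓ, ∀ k < ℓ, T ((a ^ (k + 1)) u) = (a ^ k) u
  pow_apply : ∀ ℓ : ℕ, ∀ u ∈ weightSpace h ℓ, (a ^ (ℓ + 2)) (T u) = (a ^ (ℓ + 1)) u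

section

variable {b T : Module.End K M}

lemma IsPartialInverse.lower_raise_lower_pow_apply (hT : IsPartialInverse h a T)
    (ha : a ∈ weightSpace (ad K _ h) (-2)) (hb : b = (a * b + h) * T) {ℓ : ℕ} {x : M}
    (hx : x ∈ weightSpace h ℓ) (hTx : T x = 0) {k : ℕ} (hk : k ≤ ℓ) :
    a (b ((a ^ k) x)) = ((k : ℤ) * (ℓ + 1 - k)) • (a ^ k) x := by
  have hb' (v : M) : b v = a (b (T v)) + h (T v) := congr($hb v)
  induction k with
  | zero => simp [hb' x, hTx]
  | succ k ih =>
    have hkx := mem_weightSpace.mp (pow_apply_mem_weightSpace ha hx (k := k) rfl)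
    rw [hb', hT.apply_pow_succ ℓ x hx k hk, ih (by lia), hkx, ← add_smul, map_zsmul,
      ← Module.End.mul_apply, ← pow_succ']
    congr 1
    push_cast
    ring

lemma IsPartialInverse.raise_lower_pow_succ_apply (hT : IsPartialInverse h a T)
    (ha : a ∈ weightSpace (ad K _ h) (-2)) (hb : b = (a * b + h) * T) {ℓ : ℕ} {u : M}
    (hu : u ∈ weightSpace h ℓ) {k : ℕ} (hk : k ≤ ℓ) :
    b ((a ^ (k + 1)) u) = a (b ((a ^ k) u)) + h ((a ^ k) u) := by
  have hb' (v : M) : b v = a (b (T v)) + h (T v) := congr($hb v)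
  rcases hk.lt_or_eq with hk | rfl
  · rw [hb', hT.apply_pow_succ ℓ u hu k hk]
  have hw : T u ∈ weightSpace h (k + 2 : ℕ) :=
    apply_mem_weightSpace hT.mem_weightSpace_ad hu (by push_cast; ring)
  have hpow (n : ℕ) : (a ^ n) (a (T u)) = (a ^ (n + 1)) (T u) := by
    rw [pow_succ, Module.End.mul_apply]
  have hlow : b ((a ^ (k + 1)) (a (T u))) = a (b ((a ^ k) (a (T u)))) + h ((a ^ k) (a (T u))) := by
    rw [hpow, hpow, hb', hT.apply_pow_succ _ _ hw (k + 1) (by lia)]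
  -- The primitive part `u - a (T u)` of `u` is killed by `a ^ (k + 1)`.
  have hx : u - a (T u) ∈ weightSpace h k :=
    sub_mem hu (apply_mem_weightSpace ha hw (by push_cast; ring))
  have hTx : T (u - a (T u)) = 0 := by
    simpa [sub_eq_zero] using (hT.apply_pow_succ _ _ hw 0 (by lia)).symm
  have hax : (a ^ (k + 1)) (u - a (T u)) = 0 := by
    rw [map_sub, ← hT.pow_apply k u hu, pow_succ a (k + 1), Module.End.mul_apply, sub_self]
  have hprim : a (b ((a ^ k) (u - a (T u)))) + h ((a ^ k) (u - a (T u))) = 0 := by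
    rw [hT.lower_raise_lower_pow_apply ha hb hx hTx le_rfl,
      mem_weightSpace.mp (pow_apply_mem_weightSpace ha hx (k := k) rfl)]
    module
  rw [← sub_add_cancel u (a (T u)), map_add (a ^ (k + 1)), map_add (a ^ k), hax, zero_add, hlow,
    map_add b, map_add a, map_add h]
  linear_combination (norm := module) -hprim

lemma IsPartialInverse.lie_raise_lower (hT : IsPartialInverse h a T) (hL : IsLefschetz h a)
    (hh : IsIntDiagonalizable h) (ha : a ∈ weightSpace (ad K _ h) (-2)) (hb : b = (a * b + h) * T) :
    ⁅b, a⁆ = h := by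
  rw [Ring.lie_def, sub_eq_iff_eq_add']
  refine hh.hom_ext fun m v hv ↦ ?_
  rcases le_or_gt 0 m with hm | hm
  · lift m to ℕ using hm
    simpa using hT.raise_lower_pow_succ_apply ha hb hv m.zero_le
  · obtain ⟨ℓ, rfl⟩ : ∃ ℓ : ℕ, m = -(ℓ : ℤ) := ⟨(-m).toNat, by lia⟩
    obtain ⟨u, hu, rfl⟩ := (hL ℓ).surjOn hv
    simpa [pow_succ'] using hT.raise_lower_pow_succ_apply ha hb hu le_rfl

end

variable [CharZero K]

lemma IsLefschetz.exists_apply_eq (hL : IsLefschetz h a) (hh : IsIntDiagonalizable h) :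
    ∃ T : Module.End K M,
      (∀ ℓ : ℕ, ∀ v ∈ weightSpace h ℓ, ∀ w ∈ weightSpace h (ℓ + 2 : ℕ),
        (a ^ (ℓ + 2)) w = (a ^ (ℓ + 1)) v → T v = w) ∧
      ∀ ℓ : ℕ, ∀ u ∈ weightSpace h (ℓ + 1 : ℕ), T ((a ^ (ℓ + 1)) u) = (a ^ ℓ) u := by
  choose S hS using fun ℓ ↦ exists_apply_apply_eq_of_injOn (hL ℓ).injOn
  obtain ⟨T, hT⟩ := hh.exists_apply_eq fun m ↦
    if 0 ≤ m then S (m.toNat + 2) * a ^ (m.toNat + 1) else a ^ ((-m).toNat - 1) * S (-m).toNat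
  refine ⟨T, fun ℓ v hv w hw hvw ↦ ?_, fun ℓ u hu ↦ ?_⟩
  · simp [hT ℓ v hv, ← hvw, hS _ w hw]
  · rw [hT _ _ ((hL (ℓ + 1)).mapsTo hu), if_neg (by lia), neg_neg, Int.toNat_natCast,
      Module.End.mul_apply, hS _ _ hu, Nat.add_sub_cancel]

lemma IsLefschetz.exists_isPartialInverse (hL : IsLefschetz h a) (hh : IsIntDiagonalizable h)
    (ha : a ∈ weightSpace (ad K _ h) (-2)) : ∃ T, IsPartialInverse h a T := by
  obtain ⟨T, hT_nonneg, hT_neg⟩ := hL.exists_apply_eq hh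
  have hlift (ℓ : ℕ) (v : M) (hv : v ∈ weightSpace h ℓ) :
      ∃ w ∈ weightSpace h (ℓ + 2 : ℕ), (a ^ (ℓ + 2)) w = (a ^ (ℓ + 1)) v :=
    (hL (ℓ + 2)).surjOn (pow_apply_mem_weightSpace ha hv (by push_cast; ring))
  refine ⟨T, hh.mem_weightSpace_ad_iff.mpr fun m v hv ↦ ?_, fun ℓ u hu k hk ↦ ?_,
    fun ℓ u hu ↦ ?_⟩
  · rcases le_or_gt 0 m with hm | hm
    · lift m to ℕ using hm
      obtain ⟨w, hw, hvw⟩ := hlift m v hv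
      rw [hT_nonneg m v hv w hw hvw, add_comm]
      exact hw
    · obtain ⟨ℓ, rfl⟩ : ∃ ℓ : ℕ, m = -((ℓ + 1 : ℕ) : ℤ) := ⟨(-m - 1).toNat, by lia⟩
      obtain ⟨u, hu, rfl⟩ := (hL (ℓ + 1)).surjOn hv
      rw [hT_neg ℓ u hu]
      exact pow_apply_mem_weightSpace ha hu (by push_cast; ring)
  · rcases le_or_gt (2 * (k + 1)) ℓ with hkℓ | hkℓ
    · obtain ⟨m, rfl⟩ := Nat.exists_eq_add_of_le hkℓ
      refine hT_nonneg m _ (pow_apply_mem_weightSpace ha hu (by push_cast; ring)) _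
        (pow_apply_mem_weightSpace ha hu (by push_cast; ring)) ?_
      simp only [← Module.End.mul_apply, ← pow_add]
      congr 2
      ring
    · obtain ⟨m, rfl⟩ := Nat.exists_eq_add_of_lt hk
      obtain ⟨j, rfl⟩ : ∃ j, k = m + j := Nat.exists_eq_add_of_le (by lia)
      have := hT_neg j ((a ^ m) u) (pow_apply_mem_weightSpace ha hu (by push_cast; ring))
      simp only [← Module.End.mul_apply, ← pow_add] at this
      rwa [show j + 1 + m = m + j + 1 by ring, show j + m = m + j by ring] at this
  · obtain ⟨w, hw, hvw⟩ := hlift ℓ u hu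
    rw [hT_nonneg ℓ u hu w hw hvw, hvw]

lemma IsPartialInverse.exists_raising {T : Module.End K M} (hT : IsPartialInverse h a T)
    (hh : IsIntDiagonalizable h) (ha : a ∈ weightSpace (ad K _ h) (-2)) :
    ∃ b ∈ weightSpace (ad K _ h) 2, b = (a * b + h) * T := by
  obtain ⟨n, hn⟩ := hh.ad.isNilpotent_of_mem_weightSpace_ad two_ne_zero hT.mem_weightSpace_ad
  have hh0 : h ∈ weightSpace (ad K _ h) 0 := mem_weightSpace_ad_zero.mpr (Commute.refl h)
  refine ⟨∑ i ∈ Finset.range n, a ^ i * h * T ^ (i + 1), sum_mem fun i _ ↦ ?_, ?_⟩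
  · convert mul_mem_weightSpace_ad (mul_mem_weightSpace_ad (pow_mem_weightSpace_ad ha i) hh0)
      (pow_mem_weightSpace_ad hT.mem_weightSpace_ad (i + 1)) using 2
    push_cast
    ring
  · calc ∑ i ∈ Finset.range n, a ^ i * h * T ^ (i + 1)
        = ∑ i ∈ Finset.range (n + 1), a ^ i * h * T ^ (i + 1) := by
          rw [Finset.sum_range_succ, pow_succ T n, hn, zero_mul, mul_zero, add_zero]
      _ = _ := by
          rw [Finset.sum_range_succ', add_mul, Finset.mul_sum, Finset.sum_mul]
          simp only [pow_succ' a, pow_succ _ (_ + 1), pow_zero, mul_assoc, one_mul, zero_add,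
            pow_one]

lemma IsLefschetz.ad (hL : IsLefschetz h a) (hh : IsIntDiagonalizable h)
    (ha : a ∈ weightSpace (ad K _ h) (-2)) : IsLefschetz (ad K _ h) (ad K _ a) := by
  obtain ⟨T, hT⟩ := hL.exists_isPartialInverse hh ha
  obtain ⟨b, hb, hbT⟩ := hT.exists_raising hh ha
  have hba := hT.lie_raise_lower hL hh ha hbT
  refine isLefschetz_of_sl2 (b := LieAlgebra.ad K _ b) ?_ (ad_mem_weightSpace_ad ha)
    (ad_mem_weightSpace_ad hb) ?_
  · rw [← LieHom.map_lie, hba]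
  · exact LieAlgebra.ad_nilpotent_of_nilpotent
      (hh.ad.isNilpotent_of_mem_weightSpace_ad two_ne_zero hb)

end RaisingOperator

section Normalization

attribute [local instance] LieRing.ofAssociativeRing

open LieAlgebra

variable {K R : Type*} [Field K] [Ring R] [Algebra K R] {y r A N X Z : R} {c d : ℤ}

lemma mul_mem_weightLE_ad (hX : X ∈ weightLE (ad K R y) c) (hZ : Z ∈ weightLE (ad K R y) d) :
    X * Z ∈ weightLE (ad K R y) (c + d) := by
  refine (weightLE_le_iff.mpr fun i hi x hx ↦ ?_ : _ ≤
    (weightLE (ad K R y) (c + d)).comap (LinearMap.mulRight K Z)) hX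
  refine (weightLE_le_iff.mpr fun j hj z hz ↦ ?_ : _ ≤
    (weightLE (ad K R y) (c + d)).comap (LinearMap.mulLeft K x)) hZ
  exact weightSpace_le_weightLE (add_le_add hi hj) (mul_mem_weightSpace_ad hx hz)

lemma one_mem_weightLE_ad : 1 ∈ weightLE (ad K R y) 0 :=
  weightSpace_le_weightLE le_rfl (mem_weightSpace_ad_zero.mpr (Commute.one_right y))

lemma pow_mem_weightLE_ad (hX : X ∈ weightLE (ad K R y) c) (n : ℕ) :
    X ^ n ∈ weightLE (ad K R y) (n * c) := by
  induction n with
  | zero => simpa using one_mem_weightLE_ad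
  | succ n ih =>
    rw [pow_succ, Nat.cast_succ, add_one_mul]
    exact mul_mem_weightLE_ad ih hX

variable (K y r) in
/-- The group of units commuting with `r` and congruent to `1` modulo operators of negative
`ad y`-weight. -/
def unipotentCentralizer : Subgroup Rˣ where
  carrier := {u | Commute r u ∧ (u - 1 : R) ∈ weightLE (ad K R y) (-1) ∧
    (↑u⁻¹ - 1 : R) ∈ weightLE (ad K R y) (-1)}
  one_mem' := by simp
  inv_mem' := fun ⟨h, hu, hu'⟩ ↦ ⟨h.units_inv_right, hu', by simpa using hu⟩
  mul_mem' := by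
    have hmul {a b : R} (ha : a - 1 ∈ weightLE (ad K R y) (-1))
        (hb : b - 1 ∈ weightLE (ad K R y) (-1)) : a * b - 1 ∈ weightLE (ad K R y) (-1) := by
      have hab : (a - 1) * (b - 1) ∈ weightLE (ad K R y) (-1) :=
        weightLE_mono _ (by lia) (mul_mem_weightLE_ad ha hb)
      rw [show a * b - 1 = (a - 1) * (b - 1) + ((a - 1) + (b - 1)) by noncomm_ring]
      exact add_mem hab (add_mem ha hb)
    rintro u v ⟨h, hu, hu'⟩ ⟨h', hv, hv'⟩
    refine ⟨by simpa using h.mul_right h', by simpa using hmul hu hv, ?_⟩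
    simpa using hmul hv' hu'

lemma mem_weightLE_ad_of_mem_unipotentCentralizer {u : Rˣ} (hu : u ∈ unipotentCentralizer K y r) :
    (u : R) ∈ weightLE (ad K R y) 0 := by
  rw [← sub_add_cancel (u : R) 1]
  exact add_mem (weightLE_mono _ (by lia) hu.2.1) one_mem_weightLE_ad

lemma conj_mem_weightLE_ad {u : Rˣ} (hu : u ∈ unipotentCentralizer K y r)
    (hN : N ∈ weightLE (ad K R y) 0) : ↑u⁻¹ * N * u ∈ weightLE (ad K R y) 0 := by
  have huN := mul_mem_weightLE_ad (mem_weightLE_ad_of_mem_unipotentCentralizer (inv_mem hu)) hN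
  simpa using mul_mem_weightLE_ad huN (mem_weightLE_ad_of_mem_unipotentCentralizer hu)

lemma conj_mem_weightSpace_ad {u : Rˣ} (hu : u ∈ unipotentCentralizer K y r)
    (hN : N ∈ weightSpace (ad K R r) c) : ↑u⁻¹ * N * u ∈ weightSpace (ad K R r) c := by
  have huN := mul_mem_weightSpace_ad (mem_weightSpace_ad_zero.mpr (inv_mem hu).1) hN
  simpa using mul_mem_weightSpace_ad huN (mem_weightSpace_ad_zero.mpr hu.1)

lemma conj_sub_eq (g : Rˣ) (N : R) :
    ↑g⁻¹ * N * g - N = N * (g - 1) - (g - 1) * (↑g⁻¹ * N * g) := by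
  simp only [mul_sub, sub_mul, mul_one, one_mul, mul_assoc, Units.mul_inv_cancel_left]
  abel

lemma conj_sub_mem_weightLE_ad {g : Rˣ} (hg : g ∈ unipotentCentralizer K y r)
    (hN : N ∈ weightLE (ad K R y) 0) (hgc : (g - 1 : R) ∈ weightLE (ad K R y) c) :
    ↑g⁻¹ * N * g - N ∈ weightLE (ad K R y) c := by
  rw [conj_sub_eq]
  exact sub_mem (by simpa using mul_mem_weightLE_ad hN hgc)
    (by simpa using mul_mem_weightLE_ad hgc (conj_mem_weightLE_ad hg hN))

variable [CharZero K]

lemma IsIntDiagonalizable.proj_add_mul (hy : IsIntDiagonalizable (LieAlgebra.ad K R y))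
    (hX : X ∈ weightLE (LieAlgebra.ad K R y) c) (hZ : Z ∈ weightLE (LieAlgebra.ad K R y) d) :
    hy.proj (c + d) (X * Z) = hy.proj c X * hy.proj d Z := by
  have hmem := mul_mem_weightSpace_ad (hy.proj_apply_mem c X) (hy.proj_apply_mem d Z)
  have hXZ : X * Z = hy.proj c X * hy.proj d Z + (hy.proj c X * (Z - hy.proj d Z) +
      (X - hy.proj c X) * Z) := by noncomm_ring
  have hlow : hy.proj c X * (Z - hy.proj d Z) + (X - hy.proj c X) * Z ∈
      weightLE (LieAlgebra.ad K R y) (c + d - 1) := by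
    refine add_mem ?_ ?_
    · rw [add_sub_assoc]
      exact mul_mem_weightLE_ad (weightSpace_le_weightLE le_rfl (hy.proj_apply_mem c X))
        (hy.sub_proj_mem_weightLE hZ)
    · rw [add_sub_right_comm]
      exact mul_mem_weightLE_ad (hy.sub_proj_mem_weightLE hX) hZ
  rw [hXZ, map_add, hy.proj_apply_same hmem, hy.mem_weightLE_iff.mp hlow _ (by lia), add_zero]

lemma exists_mem_unipotentCentralizer_eq_one_add (hy : IsIntDiagonalizable (ad K R y))
    (hrX : Commute r X) (hX : X ∈ weightLE (ad K R y) (-1)) :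
    ∃ u ∈ unipotentCentralizer K y r, (u : R) = 1 + X := by
  obtain ⟨a, ha⟩ := hy.exists_weightLE_eq_bot
  have hpow (n : ℕ) : (-X) ^ n ∈ weightLE (ad K R y) (-n) := by
    simpa using pow_mem_weightLE_ad (neg_mem hX) n
  have hnil : (-X) ^ (-a).toNat = 0 := by
    have := hpow (-a).toNat
    rwa [ha _ (by lia), Submodule.mem_bot] at this
  set S := ∑ i ∈ Finset.range (-a).toNat, (-X) ^ i
  have hXS : (1 + X) * S = 1 := by
    have := mul_neg_geom_sum (-X) (-a).toNat
    rwa [hnil, sub_zero, sub_neg_eq_add] at this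
  have hSX : S * (1 + X) = 1 := by
    have := geom_sum_mul_neg (-X) (-a).toNat
    rwa [hnil, sub_zero, sub_neg_eq_add] at this
  have hSmem : S ∈ weightLE (ad K R y) 0 :=
    sum_mem fun i _ ↦ weightLE_mono _ (by lia) (hpow i)
  have hS1 : S - 1 = -(X * S) := by
    rw [← hXS]; noncomm_ring
  refine ⟨⟨1 + X, S, hXS, hSX⟩, ⟨(Commute.one_right r).add_right hrX, by simpa using hX, ?_⟩, rfl⟩
  change S - 1 ∈ _
  rw [hS1]
  exact neg_mem (by simpa using mul_mem_weightLE_ad hX hSmem)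

section Conjugation

variable {g : Rˣ}

lemma proj_conj_of_lt (hy : IsIntDiagonalizable (ad K R y)) (hg : g ∈ unipotentCentralizer K y r)
    (hN : N ∈ weightLE (ad K R y) 0) (hgc : (g - 1 : R) ∈ weightLE (ad K R y) c) (hcd : c < d) :
    hy.proj d (↑g⁻¹ * N * g) = hy.proj d N := by
  rw [← sub_eq_zero, ← map_sub]
  exact hy.mem_weightLE_iff.mp (conj_sub_mem_weightLE_ad hg hN hgc) d hcd

lemma proj_zero_conj (hy : IsIntDiagonalizable (ad K R y)) (hg : g ∈ unipotentCentralizer K y r)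
    (hN : N ∈ weightLE (ad K R y) 0) : hy.proj 0 (↑g⁻¹ * N * g) = hy.proj 0 N :=
  proj_conj_of_lt hy hg hN hg.2.1 (by lia)

lemma proj_conj_eq_add_lie (hy : IsIntDiagonalizable (ad K R y))
    (hg : g ∈ unipotentCentralizer K y r) (hN : N ∈ weightLE (ad K R y) 0)
    (hgc : (g - 1 : R) ∈ weightLE (ad K R y) c) :
    hy.proj c (↑g⁻¹ * N * g) = hy.proj c N + ⁅hy.proj 0 N, hy.proj c (g - 1 : R)⁆ := by
  have hleft := hy.proj_add_mul hN hgc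
  have hright := hy.proj_add_mul hgc (conj_mem_weightLE_ad hg hN)
  rw [zero_add] at hleft
  rw [add_zero, proj_zero_conj hy hg hN] at hright
  rw [← sub_eq_iff_eq_add', ← map_sub, conj_sub_eq, map_sub, hleft, hright, Ring.lie_def]

end Conjugation

/-- Deligne's condition `(ad N₀) ^ k N₋₍ₖ₊₁₎ = 0` for all `k`, where `N₋ⱼ` denotes the component
of `N` of `ad y`-weight `-j`. -/
def IsNormalized (hy : IsIntDiagonalizable (ad K R y)) (N : R) : Prop :=
  ∀ k : ℕ, (ad K R (hy.proj 0 N) ^ k) (hy.proj (-(k + 1)) N) = 0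

lemma commute_ad (K : Type*) [Field K] [Algebra K R] (h : Commute r y) :
    Commute (ad K R r) (ad K R y) :=
  mem_weightSpace_ad_zero.mp (ad_mem_weightSpace_ad (mem_weightSpace_ad_zero.mpr h))

lemma exists_lie_correction (hy : IsIntDiagonalizable (ad K R y)) (hry : Commute r y)
    (hAr : A ∈ weightSpace (ad K R r) (-2)) (hAy : A ∈ weightSpace (ad K R y) 0)
    (hL : IsLefschetz (ad K R (r - y)) (ad K R A)) {k : ℕ} {D : R}
    (hDr : D ∈ weightSpace (ad K R r) (-2)) (hDy : D ∈ weightSpace (ad K R y) (-(k + 1))) :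
    ∃ Z ∈ weightSpace (ad K R y) (-(k + 1)), Commute r Z ∧ (ad K R A ^ k) (D + ⁅A, Z⁆) = 0 := by
  have hsub {x : R} {c d : ℤ} (hxr : x ∈ weightSpace (ad K R r) c)
      (hxy : x ∈ weightSpace (ad K R y) d) : x ∈ weightSpace (ad K R (r - y)) (c - d) := by
    rw [mem_weightSpace_ad] at *
    rw [sub_lie, hxr, hxy, sub_smul]
  have hA2 := ad_mem_weightSpace_ad (hsub hAr hAy)
  have hAD : -(ad K R A ^ k) D ∈ weightSpace (ad K R (r - y)) (-(k + 1 : ℕ)) :=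
    neg_mem (pow_apply_mem_weightSpace hA2 (hsub hDr hDy) (by push_cast; ring))
  obtain ⟨Z, hZ, hAZ⟩ := (hL (k + 1)).surjOn hAD
  -- Projecting the solution of `(ad A) ^ (k + 1) Z = -(ad A) ^ k D` yields another one.
  have hcomm : Commute (ad K R A ^ (k + 1)) (hy.proj (-(k + 1))) :=
    (hy.commute_proj (commute_ad K (mem_weightSpace_ad_zero.mp hAy).symm) _).pow_left _
  have hDproj : hy.proj (-(k + 1)) ((ad K R A ^ k) D) = (ad K R A ^ k) D := by
    refine hy.proj_apply_same (pow_apply_mem_weightSpace (ad_mem_weightSpace_ad hAy) hDy ?_)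
    ring
  have hZproj : hy.proj (-(k + 1)) Z = Z := by
    refine (hL (k + 1)).injOn (hy.proj_apply_mem_weightSpace
      (commute_ad K (hry.sub_left (Commute.refl y))) hZ _) hZ ?_
    rw [← Module.End.mul_apply, hcomm.eq, Module.End.mul_apply, hAZ, map_neg, hDproj]
  have hZy : Z ∈ weightSpace (ad K R y) (-(k + 1)) := hZproj ▸ hy.proj_apply_mem _ Z
  refine ⟨Z, hZy, (mem_weightSpace_ad_zero (K := K)).mp ?_, ?_⟩
  · have hZ' := mem_weightSpace_ad.mp hZ
    rw [mem_weightSpace_ad] at hZy ⊢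
    rw [← sub_add_cancel r y, add_lie, hZ', hZy, ← add_smul]
    simp
  · rw [map_add, ← ad_apply (R := K), ← Module.End.mul_apply, ← pow_succ, hAZ, add_neg_cancel]

lemma exists_conj_lie_pow_proj_eq_zero (hy : IsIntDiagonalizable (ad K R y)) (hry : Commute r y)
    (hNy : N ∈ weightLE (ad K R y) 0) (hNr : N ∈ weightSpace (ad K R r) (-2))
    (hL : IsLefschetz (ad K R (r - y)) (ad K R (hy.proj 0 N))) (n : ℕ) :
    ∃ g ∈ unipotentCentralizer K y r,
      (∀ d : ℤ, -(n + 1) < d → hy.proj d (↑g⁻¹ * N * g) = hy.proj d N) ∧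
      (ad K R (hy.proj 0 N) ^ n) (hy.proj (-(n + 1)) (↑g⁻¹ * N * g)) = 0 := by
  have hproj (d : ℤ) := hy.proj_apply_mem_weightSpace (commute_ad K hry) hNr d
  obtain ⟨Z, hZy, hrZ, hZ⟩ := exists_lie_correction hy hry (hproj 0) (hy.proj_apply_mem 0 N) hL
    (hproj (-(n + 1))) (hy.proj_apply_mem _ N)
  have hZ_mem := weightSpace_le_weightLE le_rfl hZy
  obtain ⟨g, hg, hgZ⟩ := exists_mem_unipotentCentralizer_eq_one_add hy hrZ
    (weightLE_mono _ (by lia) hZ_mem)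
  rw [← sub_eq_iff_eq_add'] at hgZ
  refine ⟨g, hg, fun d hd ↦ proj_conj_of_lt hy hg hNy (hgZ ▸ hZ_mem) hd, ?_⟩
  rw [proj_conj_eq_add_lie hy hg hNy (hgZ ▸ hZ_mem), hgZ, hy.proj_apply_same hZy, hZ]

lemma exists_isNormalized_conj (hy : IsIntDiagonalizable (ad K R y)) (hry : Commute r y)
    (hNy : N ∈ weightLE (ad K R y) 0) (hNr : N ∈ weightSpace (ad K R r) (-2))
    (hL : IsLefschetz (ad K R (r - y)) (ad K R (hy.proj 0 N))) :
    ∃ u ∈ unipotentCentralizer K y r, IsNormalized hy (↑u⁻¹ * N * u) := by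
  have hstep (n : ℕ) : ∃ u ∈ unipotentCentralizer K y r, ∀ k < n,
      (ad K R (hy.proj 0 N) ^ k) (hy.proj (-(k + 1)) (↑u⁻¹ * N * u)) = 0 := by
    induction n with
    | zero => exact ⟨1, one_mem _, by simp⟩
    | succ n ih =>
      obtain ⟨u, hu, hun⟩ := ih
      have hN₀ := proj_zero_conj hy hu hNy
      obtain ⟨g, hg, hlt, heq⟩ := exists_conj_lie_pow_proj_eq_zero hy hry
        (conj_mem_weightLE_ad hu hNy) (conj_mem_weightSpace_ad hu hNr) (by rwa [hN₀]) n
      rw [hN₀] at heq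
      have hconj : ↑(u * g)⁻¹ * N * ↑(u * g) = ↑g⁻¹ * (↑u⁻¹ * N * u) * g := by
        simp only [mul_inv_rev, Units.val_mul, mul_assoc]
      refine ⟨u * g, mul_mem hu hg, fun k hk ↦ ?_⟩
      rw [hconj]
      rcases Nat.lt_succ_iff_lt_or_eq.mp hk with hk | rfl
      · rw [hlt _ (by lia), hun k hk]
      · exact heq
  obtain ⟨a, ha⟩ := hy.exists_weightLE_eq_bot
  obtain ⟨u, hu, hun⟩ := hstep (-a).toNat
  refine ⟨u, hu, fun k ↦ ?_⟩
  rw [proj_zero_conj hy hu hNy]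
  rcases lt_or_ge k (-a).toNat with hk | hk
  · exact hun k hk
  · have := weightSpace_le_weightLE le_rfl (hy.proj_apply_mem (-(k + 1)) (↑u⁻¹ * N * u))
    rw [ha _ (by lia), Submodule.mem_bot] at this
    rw [this, map_zero]

lemma eq_one_of_isNormalized_conj (hy : IsIntDiagonalizable (ad K R y)) (hry : Commute r y)
    (hNy : N ∈ weightLE (ad K R y) 0)
    (hL : IsLefschetz (ad K R (r - y)) (ad K R (hy.proj 0 N))) (hN : IsNormalized hy N) {g : Rˣ}
    (hg : g ∈ unipotentCentralizer K y r) (hgN : IsNormalized hy (↑g⁻¹ * N * g)) : g = 1 := by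
  have hstep (n : ℕ) : (g - 1 : R) ∈ weightLE (ad K R y) (-(n + 1)) := by
    induction n with
    | zero => simpa using hg.2.1
    | succ n ih =>
      set Z := hy.proj (-(n + 1)) (g - 1 : R)
      have hZr : Z ∈ weightSpace (ad K R r) 0 := hy.proj_apply_mem_weightSpace (commute_ad K hry)
        (mem_weightSpace_ad_zero.mpr (hg.1.sub_right (Commute.one_right r))) _
      have hZy : Z ∈ weightSpace (ad K R y) (-(n + 1)) := hy.proj_apply_mem _ _
      have hZ_mem : Z ∈ weightSpace (ad K R (r - y)) (n + 1 : ℕ) := by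
        rw [mem_weightSpace_ad] at *
        rw [sub_lie, hZr, hZy, ← sub_smul]
        simp
      have hAZ : (ad K R (hy.proj 0 N) ^ (n + 1)) Z = 0 := by
        have := hgN n
        rwa [proj_zero_conj hy hg hNy, proj_conj_eq_add_lie hy hg hNy ih, map_add, hN n, zero_add,
          ← ad_apply (R := K), ← Module.End.mul_apply, ← pow_succ] at this
      have hZ0 : Z = 0 := (hL (n + 1)).injOn hZ_mem (zero_mem _) (by rw [hAZ, map_zero])
      have := (hy.mem_weightLE_sub_one_iff ih).mpr hZ0
      rwa [show -((n + 1 : ℕ) + 1 : ℤ) = -(n + 1) - 1 by push_cast; ring]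
  obtain ⟨a, ha⟩ := hy.exists_weightLE_eq_bot
  have := hstep (-a).toNat
  rw [ha _ (by lia), Submodule.mem_bot, sub_eq_zero] at this
  exact Units.ext this

lemma existsUnique_isNormalized_conj (hy : IsIntDiagonalizable (ad K R y)) (hry : Commute r y)
    (hNy : N ∈ weightLE (ad K R y) 0) (hNr : N ∈ weightSpace (ad K R r) (-2))
    (hL : IsLefschetz (ad K R (r - y)) (ad K R (hy.proj 0 N))) :
    ∃! u, u ∈ unipotentCentralizer K y r ∧ IsNormalized hy (↑u⁻¹ * N * u) := by
  obtain ⟨u, hu, huN⟩ := exists_isNormalized_conj hy hry hNy hNr hL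
  refine ⟨u, ⟨hu, huN⟩, fun v ⟨hv, hvN⟩ ↦ ?_⟩
  have hconj : ↑v⁻¹ * N * v = ↑(u⁻¹ * v)⁻¹ * (↑u⁻¹ * N * u) * ↑(u⁻¹ * v) := by
    simp [mul_assoc]
  rw [hconj] at hvN
  exact (inv_mul_eq_one.mp (eq_one_of_isNormalized_conj hy hry (conj_mem_weightLE_ad hu hNy)
    (by rwa [proj_zero_conj hy hu hNy]) huN (mul_mem (inv_mem hu) hv) hvN)).symm

end Normalization

section Decomposition

attribute [local instance] LieRing.ofAssociativeRing

open LieAlgebra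

variable {K R : Type*} [Field K] [Ring R] [Algebra K R] {y N : R}

lemma ad_pow_map {R' : Type*} [Ring R'] [Algebra K R'] (φ : R →ₐ[K] R') (a x : R) (k : ℕ) :
    (ad K R' (φ a) ^ k) (φ x) = φ ((ad K R a ^ k) x) := by
  induction k with
  | zero => rfl
  | succ k ih => simp [pow_succ', ih, Ring.lie_def]

variable [CharZero K]

lemma IsIntDiagonalizable.proj_map {R' : Type*} [Ring R'] [Algebra K R'] (φ : R →ₐ[K] R')
    (hy : IsIntDiagonalizable (LieAlgebra.ad K R y))
    (hy' : IsIntDiagonalizable (LieAlgebra.ad K R' (φ y))) (c : ℤ) (x : R) :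
    hy'.proj c (φ x) = φ (hy.proj c x) := by
  refine congr($(hy.hom_ext (f := hy'.proj c ∘ₗ φ.toLinearMap)
    (g := φ.toLinearMap ∘ₗ hy.proj c) fun k v hv ↦ ?_) x)
  have hφv : φ v ∈ weightSpace (LieAlgebra.ad K R' (φ y)) k := by
    rw [mem_weightSpace_ad, Ring.lie_def] at *
    rw [← map_mul, ← map_mul, ← map_sub, hv, map_zsmul]
  simp [hy'.proj_apply_of_mem hφv, hy.proj_apply_of_mem hv, apply_ite φ]

lemma isNormalized_map_iff {R' : Type*} [Ring R'] [Algebra K R'] (φ : R ≃ₐ[K] R')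
    (hy : IsIntDiagonalizable (ad K R y)) (hy' : IsIntDiagonalizable (ad K R' (φ y))) :
    IsNormalized hy' (φ N) ↔ IsNormalized hy N := by
  have hproj (c : ℤ) : hy'.proj c (φ N) = φ (hy.proj c N) := hy.proj_map φ.toAlgHom hy' c N
  refine forall_congr' fun k ↦ ?_
  rw [hproj, hproj]
  exact Eq.congr_left (ad_pow_map φ.toAlgHom _ _ k) |>.trans (map_eq_zero_iff φ φ.injective)

lemma exists_eq_sum_proj (hy : IsIntDiagonalizable (ad K R y))
    (hN : N ∈ weightLE (ad K R y) 0) : ∃ n, N = ∑ j ∈ Finset.range n, hy.proj (-j) N := by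
  have hrem (n : ℕ) : N - ∑ j ∈ Finset.range n, hy.proj (-j) N ∈ weightLE (ad K R y) (-n) := by
    induction n with
    | zero => simpa using hN
    | succ n ih =>
      have hproj : hy.proj (-n) (∑ j ∈ Finset.range n, hy.proj (-j) N) = 0 := by
        rw [map_sum]
        refine Finset.sum_eq_zero fun j hj ↦ hy.proj_apply_ne (hy.proj_apply_mem (-j) N) ?_
        have := Finset.mem_range.mp hj
        lia
      have := hy.sub_proj_mem_weightLE ih
      rwa [map_sub, hproj, sub_zero, sub_sub, ← Finset.sum_range_succ, ← neg_add',
        ← Nat.cast_succ] at this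
  obtain ⟨a, ha⟩ := hy.exists_weightLE_eq_bot
  have := hrem (-a).toNat
  rw [ha _ (by lia), Submodule.mem_bot, sub_eq_zero] at this
  exact ⟨_, this⟩

lemma isNormalized_iff_exists_eq_sum (hy : IsIntDiagonalizable (ad K R y))
    (hN : N ∈ weightLE (ad K R y) 0) :
    IsNormalized hy N ↔ ∃ (n : ℕ) (C : ℕ → R), (∀ j : ℕ, C j ∈ weightSpace (ad K R y) (-j)) ∧
      N = ∑ j ∈ Finset.range n, C j ∧ C 1 = 0 ∧
      ∀ k : ℕ, 0 < k → (ad K R (C 0) ^ (k - 1)) (C k) = 0 := by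
  constructor
  · intro h
    obtain ⟨n, hn⟩ := exists_eq_sum_proj hy hN
    refine ⟨n, fun j ↦ hy.proj (-j) N, fun j ↦ hy.proj_apply_mem _ _, hn, ?_, fun k hk ↦ ?_⟩
    · simpa using h 0
    · simpa [Nat.cast_pred hk] using h (k - 1)
  · rintro ⟨n, C, hC, rfl, -, h⟩ k
    have hproj (j : ℕ) : hy.proj (-j) (∑ i ∈ Finset.range n, C i) = if j < n then C j else 0 := by
      simp [map_sum, hy.proj_apply_of_mem (hC _)]
    have h0 := hproj 0
    have hk := hproj (k + 1)
    push_cast at h0 hk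
    rw [neg_zero] at h0
    rw [hk]
    split_ifs with hkn
    · rw [h0, if_pos (by lia)]
      exact h (k + 1) k.succ_pos
    · rw [map_zero]

end Decomposition

section Grading

attribute [local instance] LieRing.ofAssociativeRing

open LieAlgebra

variable {K V : Type*} [Field K] [AddCommGroup V] [Module K V] {W : ℤ → Submodule K V}
  {X Y Y' : Module.End K V}

lemma apply_sub_zsmul_mem_weightLE {k : ℤ} {v : V} (hv : v ∈ weightLE Y k) :
    Y v - k • v ∈ weightLE Y (k - 1) := by
  refine (weightLE_le_iff.mpr fun j hj u hu ↦ ?_ : _ ≤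
    (weightLE Y (k - 1)).comap (Y - algebraMap ℤ _ k)) hv
  have hu' : (Y - algebraMap ℤ _ k) u = (j - k) • u := by
    rw [LinearMap.sub_apply, mem_weightSpace.mp hu, Module.algebraMap_end_apply, sub_smul]
  rw [Submodule.mem_comap, hu']
  rcases eq_or_lt_of_le hj with rfl | hj
  · simp
  · exact zsmul_mem (weightSpace_le_weightLE (by lia) hu) _

lemma IsGrading.weightLE_eq (hY : IsGrading W Y) : weightLE Y = W :=
  funext fun k ↦ (hY k).symm

variable [CharZero K]

lemma IsIntDiagonalizable.exists_commute_isProj (hX : IsIntDiagonalizable X)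
    {p : Submodule K V} (hp : ∀ v ∈ p, X v ∈ p) :
    ∃ q : Module.End K V, Commute X q ∧ LinearMap.IsProj p q := by
  obtain ⟨f, hf⟩ := p.subtype.exists_leftInverse_of_injective p.ker_subtype
  obtain ⟨q, hq⟩ := hX.exists_apply_eq fun k ↦ hX.proj k ∘ₗ p.subtype ∘ₗ f
  have hmem (k : ℤ) {v : V} (hv : v ∈ p) : hX.proj k v ∈ p := hX.proj_apply_mem_of_stable hp hv k
  refine ⟨q, ?_, ?_⟩
  · refine (mem_weightSpace_ad_zero (K := K)).mp (hX.mem_weightSpace_ad_iff.mpr fun k v hv ↦ ?_)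
    rw [hq k v hv, zero_add]
    exact hX.proj_apply_mem k _
  · refine ⟨fun v ↦ hX.induction (p := p.comap q) (fun k u hu ↦ ?_) v, fun v hv ↦ ?_⟩
    · rw [Submodule.mem_comap, hq k u hu]
      exact hmem k (f u).2
    · have hproj (k : ℤ) : q (hX.proj k v) = hX.proj k v := by
        have hfv : (p.subtype ∘ₗ f) (hX.proj k v) = hX.proj k v :=
          congr(($hf ⟨hX.proj k v, hmem k hv⟩ : V))
        rw [hq k _ (hX.proj_apply_mem k v), LinearMap.comp_apply, hfv,
          hX.proj_apply_same (hX.proj_apply_mem k v)]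
      have hsum : ∑ k ∈ hX.support, hX.proj k v = v := by
        rw [← LinearMap.sum_apply, hX.sum_proj, Module.End.one_apply]
      conv_lhs => rw [← hsum]
      rw [map_sum, Finset.sum_congr rfl fun k _ ↦ hproj k, hsum]

lemma mem_weightLE_of_apply_sub_zsmul_mem {k : ℤ} {v : V}
    (hv : Y v - k • v ∈ weightLE Y (k - 1)) : v ∈ weightLE Y k := by
  have hsurj : weightLE Y (k - 1) ≤ (weightLE Y (k - 1)).map (Y - algebraMap ℤ _ k) := by
    refine weightLE_le_iff.mpr fun j hj u hu ↦ ?_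
    have hc : ((j - k : ℤ) : K) ≠ 0 := Int.cast_ne_zero.mpr (by lia)
    refine ⟨((j - k : ℤ) : K)⁻¹ • u, Submodule.smul_mem _ _ (weightSpace_le_weightLE hj hu), ?_⟩
    rw [map_smul, LinearMap.sub_apply, mem_weightSpace.mp hu, Module.algebraMap_end_apply,
      ← sub_smul, ← Int.cast_smul_eq_zsmul K, inv_smul_smul₀ hc]
  obtain ⟨u, hu, huv⟩ := hsurj hv
  have hvu : v - u ∈ weightSpace Y k := by
    rw [mem_weightSpace, map_sub, smul_sub]
    rw [LinearMap.sub_apply, Module.algebraMap_end_apply] at huv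
    linear_combination (norm := module) -huv
  rw [← sub_add_cancel v u]
  exact add_mem (weightSpace_le_weightLE le_rfl hvu) (weightLE_mono _ (by lia) hu)

lemma isGrading_of_apply_sub_zsmul_mem (hmono : Monotone W) (hbot : ∃ a, ∀ k ≤ a, W k = ⊥)
    (htop : ∃ b, ∀ k, b ≤ k → W k = ⊤) (hY : ∀ k, ∀ v ∈ W k, Y v - k • v ∈ W (k - 1)) :
    IsGrading W Y := by
  obtain ⟨a, ha⟩ := hbot
  obtain ⟨b, hb⟩ := htop
  intro k
  refine le_antisymm ?_ (weightLE_le_iff.mpr fun j hj ↦ ?_)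
  · change W k ≤ weightLE Y k
    rcases le_total k a with hk | hk
    · simp [ha k hk]
    induction k, hk using Int.leInduction with
    | base => simp [ha a le_rfl]
    | succ k _ ih =>
      refine fun v hv ↦ mem_weightLE_of_apply_sub_zsmul_mem ?_
      have := hY _ v hv
      rw [add_sub_cancel_right] at this ⊢
      exact ih this
  · have hdesc (v : V) (hv : v ∈ weightSpace Y j) (n : ℕ) (hvn : v ∈ W (j + n)) : v ∈ W j := by
      induction n with
      | zero => simpa using hvn
      | succ n ih =>
        have hc : ((-(n + 1) : ℤ) : K) ≠ 0 := Int.cast_ne_zero.mpr (by lia)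
        have := hY _ v hvn
        rw [mem_weightSpace.mp hv, ← sub_smul, ← Int.cast_smul_eq_zsmul K] at this
        refine ih ((Submodule.smul_mem_iff _ hc).mp ?_)
        convert this using 2 <;> push_cast <;> ring
    refine fun v hv ↦ hmono hj (hdesc v hv (b - j).toNat ?_)
    rw [hb _ (by lia)]
    trivial

lemma exists_isGrading_commute (hX : IsIntDiagonalizable X) (hXW : ∀ k, ∀ v ∈ W k, X v ∈ W k)
    (hmono : Monotone W) (hbot : ∃ a, ∀ k ≤ a, W k = ⊥) (htop : ∃ b, ∀ k, b ≤ k → W k = ⊤) :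
    ∃ Y, IsGrading W Y ∧ Commute X Y := by
  choose q hXq hq using fun k ↦ hX.exists_commute_isProj (hXW k)
  obtain ⟨a, ha⟩ := hbot
  obtain ⟨b, hb⟩ := htop
  refine ⟨algebraMap ℤ _ b - ∑ j ∈ Finset.Ico a b, q j,
    isGrading_of_apply_sub_zsmul_mem hmono ⟨a, ha⟩ ⟨b, hb⟩ fun k v hv ↦ ?_,
    (Algebra.commute_algebraMap_right b X).sub_right (Commute.sum_right _ _ _ fun j _ ↦ hXq j)⟩
  rcases le_or_gt k a with hka | hka
  · simp [show v = 0 by simpa [ha k hka] using hv]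
  rcases lt_or_ge b k with hkb | hkb
  · simp [hb (k - 1) (by lia)]
  -- On `W k` the summands with `k ≤ j` are the identity, and the other ones map to `W (k - 1)`.
  have hge : ∑ j ∈ Finset.Ico k b, q j v = (b - k) • v := by
    rw [Finset.sum_congr rfl fun j hj ↦ (hq j).map_id v (hmono (Finset.mem_Ico.mp hj).1 hv),
      Finset.sum_const, Int.card_Ico, ← natCast_zsmul, Int.toNat_of_nonneg (by lia)]
  have hlt : ∑ j ∈ Finset.Ico a k, q j v ∈ W (k - 1) :=
    sum_mem fun j hj ↦ hmono (by have := Finset.mem_Ico.mp hj; lia) ((hq j).map_mem v)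
  have hsplit : ∑ j ∈ Finset.Ico a b, q j v =
      ∑ j ∈ Finset.Ico a k, q j v + ∑ j ∈ Finset.Ico k b, q j v := by
    rw [← Finset.Ico_union_Ico_eq_Ico hka.le hkb,
      Finset.sum_union (Finset.Ico_disjoint_Ico_consecutive a k b)]
  rw [LinearMap.sub_apply, Module.algebraMap_end_apply, LinearMap.sum_apply, hsplit, hge]
  convert neg_mem hlt using 1
  module

lemma exists_unipotent_mul_eq (hY : IsIntDiagonalizable Y) (hY' : IsIntDiagonalizable Y')
    (hYY' : weightLE Y = weightLE Y') (hXY : Commute X Y) (hXY' : Commute X Y') :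
    ∃ u ∈ unipotentCentralizer K Y X, Y' * u = u * Y := by
  obtain ⟨U, hU⟩ := hY.exists_apply_eq hY'.proj
  have hU1 : U - 1 ∈ weightLE (ad K _ Y) (-1) := by
    refine hY.mem_weightLE_ad_iff.mpr fun k v hv ↦ ?_
    refine (weightLE_le_iff.mpr fun j hj w hw ↦ ?_ : _ ≤
      (weightLE Y (-1 + k)).comap (U - 1)) hv
    have := hY'.sub_proj_mem_weightLE (hYY' ▸ weightSpace_le_weightLE le_rfl hw)
    rw [Submodule.mem_comap, LinearMap.sub_apply, hU j w hw, Module.End.one_apply, ← neg_sub w]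
    exact neg_mem (hYY' ▸ weightLE_mono _ (by lia) this)
  have hXU : Commute X (U - 1) := by
    refine Commute.sub_right ?_ (Commute.one_right X)
    refine hY.hom_ext fun k v hv ↦ ?_
    have hXv : X v ∈ weightSpace Y k :=
      apply_mem_weightSpace (mem_weightSpace_ad_zero.mpr hXY.symm) hv (zero_add k)
    simp only [Module.End.mul_apply, hU k v hv, hU k _ hXv]
    exact congr($(hY'.commute_proj hXY' k) v)
  obtain ⟨u, hu, huU⟩ := exists_mem_unipotentCentralizer_eq_one_add hY.ad hXU hU1
  refine ⟨u, hu, hY.hom_ext fun k v hv ↦ ?_⟩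
  rw [huU, add_sub_cancel, Module.End.mul_apply, Module.End.mul_apply, mem_weightSpace.mp hv,
    map_zsmul, hU k v hv]
  exact mem_weightSpace.mp (hY'.proj_apply_mem k v)

lemma IsGrading.mem_weightLE_ad_zero (hY : IsGrading W Y) (hbot : ∃ a, ∀ k ≤ a, W k = ⊥)
    (htop : ∃ b, ∀ k, b ≤ k → W k = ⊤) (hXW : ∀ k, ∀ v ∈ W k, X v ∈ W k) :
    X ∈ weightLE (ad K _ Y) 0 := by
  refine (hY.isIntDiagonalizable hbot htop).mem_weightLE_ad_iff.mpr fun k v hv ↦ ?_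
  rw [hY.weightLE_eq] at *
  rw [zero_add]
  exact hXW k v hv

lemma apply_mem_of_mem_unipotentCentralizer (hY : IsIntDiagonalizable Y) {u : (Module.End K V)ˣ}
    (hu : u ∈ unipotentCentralizer K Y X) {k : ℤ} {v : V} (hv : v ∈ weightLE Y k) :
    (u : Module.End K V) v ∈ weightLE Y k := by
  have := hY.mem_weightLE_ad_iff.mp (mem_weightLE_ad_of_mem_unipotentCentralizer hu) k v hv
  rwa [zero_add] at this

lemma IsGrading.conj (hY : IsGrading W Y) (hbot : ∃ a, ∀ k ≤ a, W k = ⊥)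
    (htop : ∃ b, ∀ k, b ≤ k → W k = ⊤) {u : (Module.End K V)ˣ}
    (hu : u ∈ unipotentCentralizer K Y X) : IsGrading W (↑u * Y * ↑u⁻¹) := by
  have hYd := hY.isIntDiagonalizable hbot htop
  obtain rfl := hY.weightLE_eq
  refine isGrading_of_apply_sub_zsmul_mem (weightLE_mono Y) hbot htop fun k v hv ↦ ?_
  have hv' := apply_mem_of_mem_unipotentCentralizer hYd (inv_mem hu) hv
  convert apply_mem_of_mem_unipotentCentralizer hYd hu (apply_sub_zsmul_mem_weightLE hv') using 1
  rw [map_sub, map_zsmul, ← Module.End.mul_apply (u : Module.End K V) ↑u⁻¹, Units.mul_inv]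
  rfl

lemma isNormalized_conj_iff {R : Type*} [Ring R] [Algebra K R] {y y' N : R} {u : Rˣ}
    (hu : y' * u = u * y) (hy : IsIntDiagonalizable (ad K R y))
    (hy' : IsIntDiagonalizable (ad K R y')) :
    IsNormalized hy' N ↔ IsNormalized hy (↑u⁻¹ * N * u) := by
  let φ := MulSemiringAction.toAlgEquiv K R (ConjAct.toConjAct u)
  have hφ (x : R) : φ x = u * x * ↑u⁻¹ := ConjAct.units_smul_def _ x
  obtain rfl : y' = φ y := by rw [hφ, Units.eq_mul_inv_iff_mul_eq, hu]
  rw [← isNormalized_map_iff φ hy hy']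
  simp only [hφ, mul_assoc, Units.mul_inv_cancel_left, Units.mul_inv, mul_one]

lemma existsUnique_isGrading_isNormalized {N : Module.End K V} (hX : IsIntDiagonalizable X)
    (hY : IsGrading W Y) (hXY : Commute X Y) (hbot : ∃ a, ∀ k ≤ a, W k = ⊥)
    (htop : ∃ b, ∀ k, b ≤ k → W k = ⊤) (hNW : ∀ k, ∀ v ∈ W k, N v ∈ W k)
    (hNX : N ∈ weightSpace (ad K _ X) (-2))
    (hL : IsLefschetz (X - Y) ((hY.isIntDiagonalizable hbot htop).ad.proj 0 N)) :
    ∃! Z, IsGrading W Z ∧ Commute X Z ∧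
      ∃ hZ : IsIntDiagonalizable (ad K _ Z), IsNormalized hZ N := by
  have hYd := hY.isIntDiagonalizable hbot htop
  have hlow : hYd.ad.proj 0 N ∈ weightSpace (ad K _ (X - Y)) (-2) := by
    have hX2 := hYd.ad.proj_apply_mem_weightSpace (commute_ad K hXY) hNX 0
    have hY0 := hYd.ad.proj_apply_mem 0 N
    rw [mem_weightSpace_ad] at *
    rw [sub_lie, hX2, hY0, zero_smul, sub_zero]
  obtain ⟨u, ⟨hu, huN⟩, huniq⟩ := existsUnique_isNormalized_conj hYd.ad hXY
    (hY.mem_weightLE_ad_zero hbot htop hNW) hNX (hL.ad (hX.sub hYd hXY) hlow)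
  have hXu : Commute X (↑u * Y * ↑u⁻¹) := (hu.1.mul_right hXY).mul_right hu.1.units_inv_right
  have hu' := hY.conj hbot htop hu
  have hud := (hu'.isIntDiagonalizable hbot htop).ad
  refine ⟨↑u * Y * ↑u⁻¹, ?_, ?_⟩
  · exact ⟨hu', hXu, hud, (isNormalized_conj_iff (by simp) hYd.ad hud).mpr huN⟩
  · rintro Z ⟨hZ, hXZ, hZd, hZN⟩
    obtain ⟨w, hw, hwZ⟩ := exists_unipotent_mul_eq hYd (hZ.isIntDiagonalizable hbot htop)
      (hY.weightLE_eq.trans hZ.weightLE_eq.symm) hXY hXZ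
    obtain rfl := huniq w ⟨hw, (isNormalized_conj_iff hwZ hYd.ad hZd).mp hZN⟩
    rw [Units.eq_mul_inv_iff_mul_eq, hwZ]

end Grading

section RelativeWeightFiltration

attribute [local instance] LieRing.ofAssociativeRing

open LieAlgebra

variable {K V : Type*} [Field K] [AddCommGroup V] [Module K V] {W M : ℤ → Submodule K V}
  {N X Y A : Module.End K V} {k : ℤ} {ℓ : ℕ} {v w : V}

lemma mkQ_mem_inducedFil {k j : ℤ} (v : W k) :
    Submodule.mkQ (Submodule.comap (W k).subtype (W (k - 1))) v ∈ inducedFil W M k j ↔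
      ∃ z ∈ W k, z ∈ M j ∧ z - v ∈ W (k - 1) := by
  constructor
  · rintro ⟨z, hzM, hzv⟩
    exact ⟨z, z.2, hzM, (Submodule.Quotient.eq ((W (k - 1)).comap (W k).subtype)).mp hzv⟩
  · rintro ⟨z, hzW, hzM, hzv⟩
    exact ⟨⟨z, hzW⟩, hzM, (Submodule.Quotient.eq _).mpr hzv⟩

lemma grEnd_pow_mkQ (h₁ : ∀ x ∈ W k, N x ∈ W k) (h₂ : ∀ x ∈ W (k - 1), N x ∈ W (k - 1)) (n : ℕ)
    (v : W k) : ∃ h : (N ^ n) v ∈ W k,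
      (grEnd W N k h₁ h₂ ^ n) (Submodule.mkQ _ v) = Submodule.mkQ _ (⟨(N ^ n) v, h⟩ : W k) := by
  induction n with
  | zero => exact ⟨v.2, rfl⟩
  | succ n ih =>
    obtain ⟨h, hn⟩ := ih
    simp only [pow_succ', Module.End.mul_apply, hn]
    exact ⟨h₁ _ h, rfl⟩

lemma IsRelWeightFiltration.exists_sub_mem {hNW : ∀ k, ∀ x ∈ W k, N x ∈ W k}
    (hM : IsRelWeightFiltration W N hNW M) (hvW : v ∈ W k) (hvM : v ∈ M (ℓ + k))
    (hNv : (N ^ ℓ) v ∈ W (k - 1)) : ∃ z ∈ M (ℓ - 1 + k), z - v ∈ W (k - 1) := by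
  obtain ⟨-, -, -, -, hgr⟩ := hM
  obtain ⟨-, -, -, -, hgr⟩ := hgr k
  obtain ⟨hNvW, hpow⟩ := grEnd_pow_mkQ (hNW k) (hNW (k - 1)) ℓ ⟨v, hvW⟩
  have hv := (hgr ℓ ℓ.cast_nonneg).2 (Submodule.mkQ _ ⟨v, hvW⟩)
    ((mkQ_mem_inducedFil _).mpr ⟨v, hvW, hvM, by simp⟩) (by
      rw [Int.toNat_natCast, hpow]
      exact (mkQ_mem_inducedFil _).mpr ⟨0, zero_mem _, zero_mem _, by simpa using hNv⟩)
  obtain ⟨z, -, hzM, hzv⟩ := (mkQ_mem_inducedFil _).mp hv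
  exact ⟨z, hzM, hzv⟩

lemma IsRelWeightFiltration.exists_sub_pow_apply_mem {hNW : ∀ k, ∀ x ∈ W k, N x ∈ W k}
    (hM : IsRelWeightFiltration W N hNW M) (hwW : w ∈ W k) (hwM : w ∈ M (-ℓ + k)) :
    ∃ v ∈ W k, ∃ z ∈ M (-ℓ - 1 + k), z - ((N ^ ℓ) v - w) ∈ W (k - 1) := by
  obtain ⟨-, -, -, -, hgr⟩ := hM
  obtain ⟨-, -, -, -, hgr⟩ := hgr k
  obtain ⟨-, ⟨v, -, rfl⟩, hv⟩ := (hgr ℓ ℓ.cast_nonneg).1 (Submodule.mkQ _ ⟨w, hwW⟩)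
    ((mkQ_mem_inducedFil _).mpr ⟨w, hwW, hwM, by simp⟩)
  obtain ⟨hNvW, hpow⟩ := grEnd_pow_mkQ (hNW k) (hNW (k - 1)) ℓ v
  rw [Int.toNat_natCast, hpow, ← map_sub] at hv
  obtain ⟨z, -, hzM, hz⟩ := (mkQ_mem_inducedFil _).mp hv
  exact ⟨v, v.2, z, hzM, hz⟩

lemma mem_weightSpace_sub_iff {m : ℤ} (hv : v ∈ weightSpace Y k) :
    v ∈ weightSpace (X - Y) m ↔ v ∈ weightSpace X (m + k) := by
  rw [mem_weightSpace, mem_weightSpace, LinearMap.sub_apply, mem_weightSpace.mp hv,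
    sub_eq_iff_eq_add, add_smul]

variable [CharZero K]

lemma IsIntDiagonalizable.proj_apply_of_mem_weightSpace_ad (hY : IsIntDiagonalizable Y)
    {c m n : ℤ} (hA : A ∈ weightSpace (LieAlgebra.ad K _ Y) c) (hn : c + m = n) (v : V) :
    hY.proj n (A v) = A (hY.proj m v) := by
  refine congr($(hY.hom_ext (f := hY.proj n * A) (g := A * hY.proj m) fun k v hv ↦ ?_) v)
  rw [Module.End.mul_apply, Module.End.mul_apply, hY.proj_apply_of_mem hv,
    hY.proj_apply_of_mem (apply_mem_weightSpace hA hv rfl), ← hn, apply_ite A, map_zero]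
  simp only [add_right_inj]

lemma proj_apply_eq_proj_zero_apply (hY : IsIntDiagonalizable Y)
    (hN : N ∈ weightLE (ad K _ Y) 0) (hv : v ∈ weightLE Y k) :
    hY.proj k (N v) = hY.ad.proj 0 N (hY.proj k v) := by
  have hlow := hY.mem_weightLE_ad_iff.mp (hY.ad.sub_proj_mem_weightLE hN) k v hv
  have hzero := hY.mem_weightLE_iff.mp hlow k (by lia)
  rw [LinearMap.sub_apply, map_sub, sub_eq_zero] at hzero
  rw [hzero, hY.proj_apply_of_mem_weightSpace_ad (hY.ad.proj_apply_mem 0 N) (zero_add k)]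

lemma proj_pow_apply_eq_proj_zero_pow_apply (hY : IsIntDiagonalizable Y)
    (hN : N ∈ weightLE (ad K _ Y) 0) (hv : v ∈ weightLE Y k) (n : ℕ) :
    (N ^ n) v ∈ weightLE Y k ∧ hY.proj k ((N ^ n) v) = (hY.ad.proj 0 N ^ n) (hY.proj k v) := by
  induction n with
  | zero => exact ⟨hv, rfl⟩
  | succ n ih =>
    obtain ⟨hmem, heq⟩ := ih
    simp only [pow_succ', Module.End.mul_apply]
    refine ⟨?_, by rw [proj_apply_eq_proj_zero_apply hY hN hmem, heq]⟩
    simpa only [zero_add] using hY.mem_weightLE_ad_iff.mp hN k _ hmem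

lemma IsRelWeightFiltration.eq_zero_of_proj_zero_pow_apply_eq_zero
    (hX : IsIntDiagonalizable X) (hY : IsIntDiagonalizable Y) (hXY : Commute X Y)
    (hN : N ∈ weightLE (ad K _ Y) 0) {hNW : ∀ k, ∀ x ∈ weightLE Y k, N x ∈ weightLE Y k}
    (hM : IsRelWeightFiltration (weightLE Y) N hNW (weightLE X)) (hvY : v ∈ weightSpace Y k)
    (hvX : v ∈ weightSpace X (ℓ + k)) (hv : (hY.ad.proj 0 N ^ ℓ) v = 0) : v = 0 := by
  have hvW : v ∈ weightLE Y k := weightSpace_le_weightLE le_rfl hvY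
  obtain ⟨hNvW, hNv⟩ := proj_pow_apply_eq_proj_zero_pow_apply hY hN hvW ℓ
  rw [hY.proj_apply_same hvY, hv] at hNv
  obtain ⟨z, hzM, hzv⟩ := hM.exists_sub_mem hvW (weightSpace_le_weightLE le_rfl hvX)
    ((hY.mem_weightLE_sub_one_iff hNvW).mpr hNv)
  have hz : hY.proj k z = v := by
    have := hY.mem_weightLE_iff.mp hzv k (by lia)
    rwa [map_sub, hY.proj_apply_same hvY, sub_eq_zero] at this
  calc v = hX.proj (ℓ + k) (hY.proj k z) := by rw [hz, hX.proj_apply_same hvX]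
    _ = hY.proj k (hX.proj (ℓ + k) z) :=
      congr($(hX.commute_proj (hY.commute_proj hXY k).symm (ℓ + k)) z).symm
    _ = 0 := by rw [hX.mem_weightLE_iff.mp hzM _ (by lia), map_zero]

lemma IsRelWeightFiltration.exists_proj_zero_pow_apply_eq
    (hX : IsIntDiagonalizable X) (hY : IsIntDiagonalizable Y) (hXY : Commute X Y)
    (hN : N ∈ weightLE (ad K _ Y) 0) (hNX : N ∈ weightSpace (ad K _ X) (-2))
    {hNW : ∀ k, ∀ x ∈ weightLE Y k, N x ∈ weightLE Y k}
    (hM : IsRelWeightFiltration (weightLE Y) N hNW (weightLE X)) (hwY : w ∈ weightSpace Y k)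
    (hwX : w ∈ weightSpace X (-ℓ + k)) :
    ∃ u ∈ weightSpace Y k, u ∈ weightSpace X (ℓ + k) ∧ (hY.ad.proj 0 N ^ ℓ) u = w := by
  have hN₀X := hY.ad.proj_apply_mem_weightSpace (commute_ad K hXY) hNX 0
  have hwW : w ∈ weightLE Y k := weightSpace_le_weightLE le_rfl hwY
  obtain ⟨v, hvW, z, hzM, hz⟩ :=
    hM.exists_sub_pow_apply_mem hwW (weightSpace_le_weightLE le_rfl hwX)
  have hproj : hY.proj k z = (hY.ad.proj 0 N ^ ℓ) (hY.proj k v) - w := by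
    have := hY.mem_weightLE_iff.mp hz k (by lia)
    rwa [map_sub, map_sub, (proj_pow_apply_eq_proj_zero_pow_apply hY hN hvW ℓ).2,
      hY.proj_apply_same hwY, sub_eq_zero] at this
  refine ⟨hX.proj (ℓ + k) (hY.proj k v),
    hX.proj_apply_mem_weightSpace hXY.symm (hY.proj_apply_mem k v) _, hX.proj_apply_mem _ _, ?_⟩
  have hzero : hX.proj (-ℓ + k) (hY.proj k z) = 0 := by
    have := congr($(hX.commute_proj (hY.commute_proj hXY k).symm (-ℓ + k)) z)
    rwa [Module.End.mul_apply, hX.mem_weightLE_iff.mp hzM _ (by lia), map_zero, eq_comm] at this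
  rwa [hproj, map_sub, hX.proj_apply_of_mem_weightSpace_ad (pow_mem_weightSpace_ad hN₀X ℓ)
    (show _ + (ℓ + k) = _ by ring), hX.proj_apply_same hwX, sub_eq_zero] at hzero

lemma isLefschetz_sub (hY : IsIntDiagonalizable Y) (hXY : Commute X Y) (hAY : Commute A Y)
    (hAX : A ∈ weightSpace (ad K _ X) (-2))
    (hinj : ∀ (k : ℤ) (ℓ : ℕ), ∀ v ∈ weightSpace Y k, v ∈ weightSpace X (ℓ + k) →
      (A ^ ℓ) v = 0 → v = 0)
    (hsurj : ∀ (k : ℤ) (ℓ : ℕ), ∀ w ∈ weightSpace Y k, w ∈ weightSpace X (-ℓ + k) →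
      ∃ u ∈ weightSpace Y k, u ∈ weightSpace X (ℓ + k) ∧ (A ^ ℓ) u = w) :
    IsLefschetz (X - Y) A := by
  have hcomm : Commute (X - Y) Y := hXY.sub_left (Commute.refl Y)
  have hsum (v : V) : ∑ k ∈ hY.support, hY.proj k v = v := by
    rw [← LinearMap.sum_apply, hY.sum_proj, Module.End.one_apply]
  have hprojX {m : ℤ} {v : V} (hv : v ∈ weightSpace (X - Y) m) (k : ℤ) :
      hY.proj k v ∈ weightSpace X (m + k) :=
    (mem_weightSpace_sub_iff (hY.proj_apply_mem k v)).mp (hY.proj_apply_mem_weightSpace hcomm hv k)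
  have hA : A ∈ weightSpace (ad K _ (X - Y)) (-2) := by
    rw [mem_weightSpace_ad] at *
    rw [sub_lie, hAX, hAY.symm.lie_eq, sub_zero]
  refine fun ℓ ↦ ⟨fun v hv ↦ pow_apply_mem_weightSpace hA hv (by ring),
    fun v hv v' hv' hvv' ↦ sub_eq_zero.mp ?_, fun w hw ↦ ?_⟩
  · rw [← hsum (v - v')]
    refine Finset.sum_eq_zero fun k _ ↦ hinj k ℓ _ (hY.proj_apply_mem k _)
      (hprojX (sub_mem hv hv') k) ?_
    have := congr($(hY.commute_proj (hAY.pow_left ℓ) k) (v - v'))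
    rwa [Module.End.mul_apply, Module.End.mul_apply, map_sub (A ^ ℓ), hvv', sub_self,
      map_zero] at this
  · choose u huY huX hu using fun k ↦ hsurj k ℓ _ (hY.proj_apply_mem k w) (hprojX hw k)
    refine ⟨∑ k ∈ hY.support, u k,
      sum_mem fun k _ ↦ (mem_weightSpace_sub_iff (huY k)).mpr (huX k), ?_⟩
    rw [map_sum, Finset.sum_congr rfl fun k _ ↦ hu k, hsum]

lemma IsRelWeightFiltration.isLefschetz (hX : IsIntDiagonalizable X) (hY : IsIntDiagonalizable Y)
    (hXY : Commute X Y) (hNX : N ∈ weightSpace (ad K _ X) (-2))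
    {hNW : ∀ k, ∀ x ∈ weightLE Y k, N x ∈ weightLE Y k}
    (hM : IsRelWeightFiltration (weightLE Y) N hNW (weightLE X)) :
    IsLefschetz (X - Y) (hY.ad.proj 0 N) := by
  have hN : N ∈ weightLE (ad K _ Y) 0 := hY.mem_weightLE_ad_iff.mpr fun k v hv ↦ by
    rw [zero_add]
    exact hNW k v hv
  exact isLefschetz_sub hY hXY (mem_weightSpace_ad_zero.mp (hY.ad.proj_apply_mem 0 N)).symm
    (hY.ad.proj_apply_mem_weightSpace (commute_ad K hXY) hNX 0)
    (fun _ _ _ hvY hvX ↦ hM.eq_zero_of_proj_zero_pow_apply_eq_zero hX hY hXY hN hvY hvX)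
    (fun _ _ _ hwY hwX ↦ hM.exists_proj_zero_pow_apply_eq hX hY hXY hN hNX hwY hwX)

end RelativeWeightFiltration

section Components

attribute [local instance] LieRing.ofAssociativeRing

open LieAlgebra

variable {K V : Type*} [Field K] [CharZero K] [AddCommGroup V] [Module K V]
  {W : ℤ → Submodule K V} {N Y : Module.End K V}

lemma exists_isNormalized_iff_exists_eq_sum (hY : IsIntDiagonalizable Y)
    (hN : N ∈ weightLE (ad K _ Y) 0) :
    (∃ hY : IsIntDiagonalizable (ad K _ Y), IsNormalized hY N) ↔
      ∃ (n : ℕ) (C : ℕ → Module.End K V), (∀ j : ℕ, Y * C j - C j * Y = (-(j : K)) • C j) ∧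
        N = ∑ j ∈ Finset.range n, C j ∧ C 1 = 0 ∧
        ∀ k : ℕ, 0 < k → ((adE (C 0)) ^ (k - 1)) (C k) = 0 := by
  rw [exists_prop_of_true hY.ad, isNormalized_iff_exists_eq_sum hY.ad hN]
  simp only [mem_weightSpace_ad_iff_smul, Int.cast_neg, Int.cast_natCast]
  rfl

end Components

theorem deligne_grading_exists_unique_general {K V : Type*} [Field K] [CharZero K]
    [AddCommGroup V] [Module K V]
    (W : ℤ → Submodule K V) (hWmono : Monotone W)
    (hWbot : ∃ a : ℤ, ∀ k ≤ a, W k = ⊥) (hWtop : ∃ b : ℤ, ∀ k, b ≤ k → W k = ⊤)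
    (N : Module.End K V) (hNW : ∀ k, ∀ x ∈ W k, N x ∈ W k)
    (M : ℤ → Submodule K V) (hM : IsRelWeightFiltration W N hNW M)
    (Yr : Module.End K V) (hYr : IsGrading M Yr)
    (hYrW : ∀ k, ∀ x ∈ W k, Yr x ∈ W k)
    (hYrN : Yr * N - N * Yr = (-2 : K) • N) :
    ∃! Y : Module.End K V,
      IsGrading W Y ∧ Yr * Y = Y * Yr ∧
      ∃ (n : ℕ) (C : ℕ → Module.End K V),
        (∀ j : ℕ, Y * C j - C j * Y = (-(j : K)) • C j) ∧
        N = ∑ j ∈ Finset.range n, C j ∧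
        C 1 = 0 ∧
        (∀ k : ℕ, 0 < k → ((adE (C 0)) ^ (k - 1)) (C k) = 0) := by
  have hX := hYr.isIntDiagonalizable hM.2.1 hM.2.2.1
  have hNX := mem_weightSpace_ad_iff_smul (K := K) (h := Yr) (x := N) (c := -2) |>.mpr
    (by exact_mod_cast hYrN)
  obtain ⟨Y₀, hY₀, hXY₀⟩ := exists_isGrading_commute hX hYrW hWmono hWbot hWtop
  have hL : IsLefschetz (Yr - Y₀) ((hY₀.isIntDiagonalizable hWbot hWtop).ad.proj 0 N) := by
    obtain rfl := hY₀.weightLE_eq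
    obtain rfl := hYr.weightLE_eq
    exact hM.isLefschetz hX (hY₀.isIntDiagonalizable hWbot hWtop) hXY₀ hNX
  refine (existsUnique_congr fun Y ↦ and_congr_right fun hY ↦ and_congr_right fun _ ↦ ?_).mp
    (existsUnique_isGrading_isNormalized hX hY₀ hXY₀ hWbot hWtop hNW hNX hL)
  exact exists_isNormalized_iff_exists_eq_sum (hY.isIntDiagonalizable hWbot hWtop)
    (hY.mem_weightLE_ad_zero hWbot hWtop hNW)

/-- Deligne's first theorem: given a nilpotent `N` preserving `W` whose relative weight
filtration `M = W^r(N,W)` exists, and a grading `Y^r` of `M` preserving `W` with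
`[Y^r, N] = -2N`, there is a unique grading `Y` of `W` such that (1) `[Y^r, Y] = 0`;
(2) in the decomposition `N = N₀ + N₋₁ + N₋₂ + ⋯` by eigencomponents of `ad Y`
(`N₋ⱼ` in the `(-j)`-eigenspace) one has `N₋₁ = 0`; and (3) `(ad N₀)^{k-1}(N₋ₖ) = 0`
for all `k > 0`. -/
theorem deligne_grading_exists_unique {K V : Type*} [Field K] [IsAlgClosed K] [CharZero K]
    [AddCommGroup V] [Module K V] [FiniteDimensional K V]
    (W : ℤ → Submodule K V) (hWmono : Monotone W)
    (hWbot : ∃ a : ℤ, ∀ k ≤ a, W k = ⊥) (hWtop : ∃ b : ℤ, ∀ k, b ≤ k → W k = ⊤)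
    (N : Module.End K V) (hNnil : IsNilpotent N)
    (hNW : ∀ k, ∀ x ∈ W k, N x ∈ W k)
    (M : ℤ → Submodule K V) (hM : IsRelWeightFiltration W N hNW M)
    (Yr : Module.End K V) (hYr : IsGrading M Yr)
    (hYrW : ∀ k, ∀ x ∈ W k, Yr x ∈ W k)
    (hYrN : Yr * N - N * Yr = (-2 : K) • N) :
    ∃! Y : Module.End K V,
      IsGrading W Y ∧ Yr * Y = Y * Yr ∧
      ∃ (n : ℕ) (C : ℕ → Module.End K V),
        (∀ j : ℕ, Y * C j - C j * Y = (-(j : K)) • C j) ∧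
        N = ∑ j ∈ Finset.range n, C j ∧
        C 1 = 0 ∧
        (∀ k : ℕ, 0 < k → ((adE (C 0)) ^ (k - 1)) (C k) = 0) :=
  deligne_grading_exists_unique_general W hWmono hWbot hWtop N hNW M hM Yr hYr hYrW hYrN
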